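/- arXiv:2509.24034 — 6 statements merged into one kernel-verified Lean document; each statement's English description precedes it below -/
import Mathlib

section
/- Let G be a finite abelian group and assume that lim_{n → ∞} η₁(G^{2n}) / |G|^n = 1. Then for each integer g ≥ 1, both limits lim_{n → ∞} η_g(G^{2n}) / (√g · |G|^n) and lim_{n → ∞} η_g(G^{2n+1}) / (√g · |G|^{n+1/2}) exist. -/
/-!
The product of a `g`-difference basis for `H` and a `1`-difference basis for `K` is a `g`-difference
basis for `H × K`, so `η_g(G^(a+b)) ≤ η_g(G^a) η_1(G^b)` as soon as `G^a` has a `g`-difference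
basis at all, i.e. as soon as `g ≤ |G|^a` (`etaMin_pi_add_le`). Hence each normalised sequence `u`
satisfies `u (n + m) ≤ u n * v m` with `v m = η_1(G^(2m)) / |G|^m → 1`. Letting `m → ∞` gives
`limsup u ≤ u n` for all large `n`, so `limsup u ≤ liminf u` and `u` converges
(`exists_tendsto_of_le_mul`).

If `g > |G|^a` for every `a` (which forces `G` to be trivial), no `g`-difference basis ever exists,
and `etaMin`, being the infimum of an empty set of naturals, vanishes identically.
-/

open Filter Topology

/-- `B` is a `g`-difference basis for the additive group `G`: every `x ∈ G` has at least `g`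
representations `x = b₁ - b₂` with ordered pairs `(b₁, b₂) ∈ B × B`. -/
def IsDiffBasis {G : Type*} [AddCommGroup G] (g : ℕ) (B : Set G) : Prop :=
  ∀ x : G, g ≤ Nat.card {p : G × G // p.1 ∈ B ∧ p.2 ∈ B ∧ p.1 - p.2 = x}

/-- `η_g(G)`: the minimum size of a `g`-difference basis for `G`. -/
noncomputable def etaMin (G : Type*) [AddCommGroup G] (g : ℕ) : ℕ :=
  sInf {k : ℕ | ∃ B : Set G, B.Finite ∧ IsDiffBasis g B ∧ Nat.card B = k}

lemma isDiffBasis_univ {H : Type*} [AddCommGroup H] [Finite H] {g : ℕ} (hg : g ≤ Nat.card H) :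
    IsDiffBasis g (Set.univ : Set H) := by
  intro x
  refine hg.trans (Nat.card_le_card_of_injective
    (fun y : H => ⟨(x + y, y), trivial, trivial, add_sub_cancel_right x y⟩) ?_)
  intro y z hyz
  exact congrArg (fun p => p.1.2) hyz

lemma IsDiffBasis.le_card {H : Type*} [AddCommGroup H] [Finite H] {g : ℕ} {B : Set H}
    (hB : IsDiffBasis g B) : g ≤ Nat.card H := by
  refine (hB 0).trans (Nat.card_le_card_of_injective (fun p => p.1.2) ?_)
  rintro ⟨⟨a, b⟩, _, _, hp⟩ ⟨⟨c, d⟩, _, _, hq⟩ h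
  have h1 : a = b := sub_eq_zero.1 hp
  have h2 : c = d := sub_eq_zero.1 hq
  have h3 : b = d := h
  subst h1 h2 h3
  rfl

/-- The infimum defining `η_g` is attained once `g ≤ |H|`. -/
lemma exists_card_eq_etaMin {H : Type*} [AddCommGroup H] [Finite H] {g : ℕ}
    (hg : g ≤ Nat.card H) : ∃ B : Set H, IsDiffBasis g B ∧ Nat.card B = etaMin H g := by
  obtain ⟨B, -, hB, hc⟩ := Nat.sInf_mem
    (s := {k : ℕ | ∃ B : Set H, B.Finite ∧ IsDiffBasis g B ∧ Nat.card B = k})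
    ⟨_, Set.univ, Set.toFinite _, isDiffBasis_univ hg, rfl⟩
  exact ⟨B, hB, hc⟩

lemma etaMin_eq_zero {H : Type*} [AddCommGroup H] [Finite H] {g : ℕ}
    (hg : Nat.card H < g) : etaMin H g = 0 := by
  unfold etaMin
  convert Nat.sInf_empty
  ext k
  simp only [Set.mem_ofPred_eq, Set.mem_empty_iff_false, iff_false]
  rintro ⟨B, -, hB, -⟩
  exact absurd hB.le_card (not_le.2 hg)

/-- Submultiplicativity of `η` for a group `M` split as `H × K`. -/
lemma etaMin_le_mul {H K M : Type*} [AddCommGroup H] [AddCommGroup K] [AddCommGroup M]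
    [Finite H] [Finite K] [Finite M] (e : M ≃+ H × K) {g : ℕ} (hg : g ≤ Nat.card H) :
    etaMin M g ≤ etaMin H g * etaMin K 1 := by
  obtain ⟨A, hA, hAc⟩ := exists_card_eq_etaMin hg
  obtain ⟨B, hB, hBc⟩ := exists_card_eq_etaMin (H := K) (g := 1) Nat.card_pos
  rw [← hAc, ← hBc]
  refine Nat.sInf_le ⟨e ⁻¹' (A ×ˢ B), Set.toFinite _, fun x => ?_, ?_⟩
  · -- One representation of the `K`-component extends every representation of the `H`-component.
    obtain ⟨⟨⟨c, d⟩, hc, hd, hcd⟩⟩ := (Nat.card_pos_iff.1 (hB (e x).2)).1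
    refine (hA (e x).1).trans (Nat.card_le_card_of_injective
      (fun p => ⟨(e.symm (p.1.1, c), e.symm (p.1.2, d)), ?_, ?_, ?_⟩) ?_)
    · simpa using ⟨p.2.1, hc⟩
    · simpa using ⟨p.2.2.1, hd⟩
    · apply e.injective
      simp only [map_sub, AddEquiv.apply_symm_apply]
      exact Prod.ext p.2.2.2 hcd
    · intro p q hpq
      simp only [Subtype.mk.injEq, Prod.mk.injEq, EmbeddingLike.apply_eq_iff_eq, and_true] at hpq
      exact Subtype.ext (Prod.ext hpq.1 hpq.2)
  · rw [← Nat.card_prod, ← Nat.card_congr (Equiv.Set.prod A B)]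
    exact Nat.card_congr (e.toEquiv.subtypeEquiv fun _ => Iff.rfl)

lemma etaMin_pi_add_le {G : Type*} [AddCommGroup G] [Fintype G] {g a b c : ℕ} (hc : c = a + b)
    (hg : g ≤ Fintype.card G ^ a) :
    etaMin (Fin c → G) g ≤ etaMin (Fin a → G) g * etaMin (Fin b → G) 1 := by
  subst hc
  refine etaMin_le_mul (AddEquiv.symm ⟨Fin.appendEquiv a b, fun x y => ?_⟩) (by simpa using hg)
  funext i
  refine Fin.addCases (fun j => ?_) (fun j => ?_) i <;> simp [Fin.appendEquiv]

/-- A multiplicative analogue of Fekete's lemma, in which one factor tends to `1`. -/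
lemma exists_tendsto_of_le_mul {u v : ℕ → ℝ} (hu : ∀ n, 0 ≤ u n) (hv : Tendsto v atTop (𝓝 1))
    (h : ∀ᶠ n in atTop, ∀ m, u (n + m) ≤ u n * v m) : ∃ L, Tendsto u atTop (𝓝 L) := by
  have hlow : IsBoundedUnder (· ≥ ·) atTop u := isBoundedUnder_of ⟨0, hu⟩
  have hlim : ∀ n, Tendsto (fun m => u n * v m) atTop (𝓝 (u n)) := fun n => by
    simpa using hv.const_mul (u n)
  have hup : IsBoundedUnder (· ≤ ·) atTop u := by
    obtain ⟨n, hn⟩ := h.exists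
    obtain ⟨C, hC⟩ := (hlim n).isBoundedUnder_le
    refine ⟨C, ?_⟩
    rw [eventually_map] at hC ⊢
    refine ((tendsto_sub_atTop_nat n).eventually hC).mp ?_
    filter_upwards [eventually_ge_atTop n] with k hk hkC
    have := hn (k - n)
    rw [Nat.add_sub_cancel' hk] at this
    exact this.trans hkC
  have hsup : ∀ᶠ n in atTop, limsup u atTop ≤ u n := by
    filter_upwards [h] with n hn
    rw [← (hlim n).limsup_eq, ← limsup_nat_add u n]
    refine limsup_le_limsup (Eventually.of_forall fun m => ?_) ?_ (hlim n).isBoundedUnder_le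
    · simpa only [add_comm m n] using hn m
    · exact (isBoundedUnder_of ⟨0, fun m => hu (m + n)⟩ :
        IsBoundedUnder (· ≥ ·) atTop fun m => u (m + n)).isCoboundedUnder_le
  exact ⟨limsup u atTop, tendsto_of_le_liminf_of_limsup_le
    (le_liminf_of_le hup.isCoboundedUnder_ge hsup) le_rfl hup hlow⟩

/-- Convergence along exponents `2n + r`, for a normalisation `w` that scales by `|G|` per step. -/
lemma exists_tendsto_etaMin_div (G : Type*) [AddCommGroup G] [Fintype G]
    (h : Tendsto (fun n : ℕ => (etaMin (Fin (2 * n) → G) 1 : ℝ) / (Fintype.card G : ℝ) ^ n)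
      atTop (𝓝 1)) (g r : ℕ) (w : ℕ → ℝ) (hw : ∀ n, 0 ≤ w n)
    (hadd : ∀ n m, w (n + m) = w n * (Fintype.card G : ℝ) ^ m) :
    ∃ L : ℝ, Tendsto (fun n : ℕ => (etaMin (Fin (2 * n + r) → G) g : ℝ) / w n) atTop (𝓝 L) := by
  by_cases hg : ∃ a, g ≤ Fintype.card G ^ a
  · obtain ⟨a, ha⟩ := hg
    refine exists_tendsto_of_le_mul (fun n => div_nonneg (Nat.cast_nonneg _) (hw n)) h ?_
    filter_upwards [eventually_ge_atTop a] with n hn m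
    have hle : g ≤ Fintype.card G ^ (2 * n + r) :=
      ha.trans (Nat.pow_le_pow_right Fintype.card_pos (by omega))
    rw [hadd, div_mul_div_comm]
    refine div_le_div_of_nonneg_right ?_ (mul_nonneg (hw n) (by positivity))
    exact_mod_cast etaMin_pi_add_le (by ring) hle
  · push Not at hg
    refine ⟨0, tendsto_const_nhds.congr fun n => ?_⟩
    rw [etaMin_eq_zero (by simpa using hg (2 * n + r))]
    simp

/-- If `η₁(G^{2n}) = (1 + o(1))|G|^n` as `n → ∞`, then for each `g ≥ 1` both limits
`lim_{n → ∞} η_g(G^{2n})/(√g |G|^n)` and `lim_{n → ∞} η_g(G^{2n+1})/(√g |G|^{n+1/2})` exist. -/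
theorem stmt13 (G : Type*) [AddCommGroup G] [Fintype G]
    (h : Filter.Tendsto (fun n : ℕ => (etaMin (Fin (2 * n) → G) 1 : ℝ) /
        (Fintype.card G : ℝ) ^ n) Filter.atTop (nhds 1)) :
    ∀ g : ℕ, 1 ≤ g →
      (∃ L : ℝ, Filter.Tendsto (fun n : ℕ => (etaMin (Fin (2 * n) → G) g : ℝ) /
          (Real.sqrt g * (Fintype.card G : ℝ) ^ n)) Filter.atTop (nhds L)) ∧
      (∃ L : ℝ, Filter.Tendsto (fun n : ℕ => (etaMin (Fin (2 * n + 1) → G) g : ℝ) /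
          (Real.sqrt g * (Fintype.card G : ℝ) ^ ((n : ℝ) + 1 / 2))) Filter.atTop (nhds L)) := by
  intro g _
  have hG : (0 : ℝ) < Fintype.card G := by exact_mod_cast Fintype.card_pos
  refine ⟨exists_tendsto_etaMin_div G h g 0 _ (fun n => by positivity) fun n m => ?_,
    exists_tendsto_etaMin_div G h g 1 _ (fun n => by positivity) fun n m => ?_⟩
  · rw [pow_add, mul_assoc]
  · rw [mul_assoc, ← Real.rpow_natCast _ m, ← Real.rpow_add hG]
    push_cast
    ring_nf
end

section
/- Call a partition λ of a positive integer n admissible if 2·⌊a(λ)/2⌋ + b(λ) ≥ c(λ), where a(λ) is the number of parts of λ that are even and at least 6, b(λ) is the number of parts of λ that are odd and at least 3, and c(λ) is the number of parts of λ equal to 1. Let A(n) denote the number of admissible partitions of n and p(n) the total number of partitions of n. Then lim_{n → ∞} A(n)/p(n) = 1; equivalently, almost all finite abelian 2-groups are admissible, since isomorphism classes of abelian groups of order 2^n are in bijection with partitions of n, and under this bijection a group is admissible exactly when its partition is admissible. -/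
open Filter Topology

/-- A partition `λ` of `n` is admissible if `2⌊a(λ)/2⌋ + b(λ) ≥ c(λ)`, where `a(λ)` is the
number of parts that are even and at least 6, `b(λ)` is the number of parts that are odd and at
least 3, and `c(λ)` is the number of parts equal to 1. (Under the bijection between partitions
of `n` and abelian groups of order `2^n`, this is exactly admissibility of the group.) -/
def AdmissiblePartition {n : ℕ} (lam : n.Partition) : Prop :=
  Multiset.count 1 lam.parts ≤
    2 * ((lam.parts.filter (fun i => i % 2 = 0 ∧ 6 ≤ i)).card / 2) +
      (lam.parts.filter (fun i => i % 2 = 1 ∧ 3 ≤ i)).card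

/-!
A non-admissible partition has at least as many ones as parts that are at least `5`. Raising each
part `s ≥ 5` to `s + 1` and deleting as many ones is therefore possible; it is injective and its
values have no part equal to `5` (`card_bad_le`). So it suffices that almost all partitions of `n`
have a part `5`.

Given a partition without fives and a part size `s` of it, break one copy of `s` into `s / 5` fives
and `s % 5` ones. The result together with `s % 5` determines the partition and `s`, so the number
of distinct part sizes, summed over all partitions of `n` without fives, is at most `5 p(n)`
(`sum_distinct_le`). Hence at most `5 p(n) / K` such partitions have more than `K` distinct part
sizes. At most `(n + 1) ^ (2 K)` partitions have at most `K` distinct part sizes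
(`card_few_le`), which is negligible because `p(n)` is at least `2 ^ (√n - 1)` (`two_pow_le`).

All the partitions above are built from their parts different from `1`: these determine a partition
of `n`, and any multiset of integers `≥ 2` with sum at most `n` arises from one.
-/

namespace AlmostAdmissible

/-- The multiset of parts different from `1`. -/
def core {n : ℕ} (lam : n.Partition) : Multiset ℕ := lam.parts.filter (· ≠ 1)

lemma parts_eq {n : ℕ} (lam : n.Partition) :
    lam.parts = core lam + Multiset.replicate (lam.parts.count 1) 1 := by
  have h := Multiset.filter_add_not (· ≠ 1) lam.parts
  rw [← Multiset.filter_eq' lam.parts 1]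
  simpa [core] using h.symm

lemma core_sum {n : ℕ} (lam : n.Partition) : (core lam).sum + lam.parts.count 1 = n := by
  have h := congrArg Multiset.sum (parts_eq lam)
  rw [lam.parts_sum] at h
  simpa using h.symm

lemma core_injective {n : ℕ} : Function.Injective (core (n := n)) := by
  intro x y h
  have hx := core_sum x
  have hy := core_sum y
  rw [h] at hx
  ext1
  rw [parts_eq x, parts_eq y, h, show x.parts.count 1 = y.parts.count 1 by omega]

/-- The partition of `n` obtained by adding ones to a multiset of integers `≥ 2`. -/
def pad (n : ℕ) (m : Multiset ℕ) (h2 : ∀ i ∈ m, 2 ≤ i) (hs : m.sum ≤ n) : n.Partition where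
  parts := m + Multiset.replicate (n - m.sum) 1
  parts_pos := by
    intro i hi
    rcases Multiset.mem_add.1 hi with h | h
    · exact lt_of_lt_of_le two_pos (h2 i h)
    · rw [Multiset.eq_of_mem_replicate h]; exact one_pos
  parts_sum := by simp; omega

lemma core_pad (n : ℕ) (m : Multiset ℕ) (h2 : ∀ i ∈ m, 2 ≤ i) (hs : m.sum ≤ n) :
    core (pad n m h2 hs) = m := by
  have h1 : m.filter (· ≠ 1) = m :=
    Multiset.filter_eq_self.2 fun i hi => by have := h2 i hi; omega
  have h3 : (Multiset.replicate (n - m.sum) 1).filter (· ≠ 1) = 0 :=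
    Multiset.filter_eq_nil.2 fun i hi => by simp [Multiset.eq_of_mem_replicate hi]
  simp only [core, pad, Multiset.filter_add, h1, h3, add_zero]

lemma two_le_of_mem_core {n : ℕ} {lam : n.Partition} {i : ℕ} (h : i ∈ core lam) : 2 ≤ i := by
  have h' := Multiset.mem_filter.1 h
  have := lam.parts_pos h'.1
  have := h'.2
  omega

/-! ### Non-admissible partitions and partitions without fives -/

/-- The bijection from `ℕ` to `ℕ \ {5}` raising every integer `≥ 5` by one. -/
def shift (s : ℕ) : ℕ := if 5 ≤ s then s + 1 else s

lemma shift_injective : Function.Injective shift := by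
  intro a b h
  unfold shift at h
  split_ifs at h <;> omega

lemma sum_map_shift (m : Multiset ℕ) :
    (m.map shift).sum = m.sum + m.countP (5 ≤ ·) := by
  induction m using Multiset.induction_on with
  | empty => simp
  | cons a m ih =>
    rw [Multiset.map_cons, Multiset.sum_cons, Multiset.sum_cons, ih, Multiset.countP_cons, shift]
    split_ifs <;> omega

lemma countP_le_count_one {n : ℕ} {lam : n.Partition} (h : ¬ AdmissiblePartition lam) :
    (core lam).countP (5 ≤ ·) ≤ lam.parts.count 1 := by
  have key : ∀ m : Multiset ℕ, m.countP (5 ≤ ·) ≤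
      (m.filter (fun i => i % 2 = 0 ∧ 6 ≤ i)).card +
        (m.filter (fun i => i % 2 = 1 ∧ 3 ≤ i)).card := by
    intro m
    rw [← Multiset.countP_eq_card_filter, ← Multiset.countP_eq_card_filter]
    induction m using Multiset.induction_on with
    | empty => simp
    | cons a m ih =>
      simp only [Multiset.countP_cons]
      split_ifs <;> omega
  have h1 : (core lam).countP (5 ≤ ·) ≤ lam.parts.countP (5 ≤ ·) :=
    Multiset.countP_le_of_le _ (Multiset.filter_le _ _)
  have h2 := key lam.parts
  unfold AdmissiblePartition at h
  omega

lemma card_bad_le (n : ℕ) :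
    Nat.card {lam : n.Partition // ¬ AdmissiblePartition lam} ≤
      Nat.card {lam : n.Partition // 5 ∉ lam.parts} := by
  have h2 : ∀ lam : n.Partition, ∀ i ∈ (core lam).map shift, 2 ≤ i := by
    intro lam i hi
    obtain ⟨s, hs, rfl⟩ := Multiset.mem_map.1 hi
    have := two_le_of_mem_core hs
    unfold shift
    split_ifs <;> omega
  have hsum : ∀ lam : n.Partition, ¬ AdmissiblePartition lam →
      ((core lam).map shift).sum ≤ n := by
    intro lam h
    have := countP_le_count_one h
    have := core_sum lam
    rw [sum_map_shift]
    omega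
  refine Nat.card_le_card_of_injective
    (fun x => ⟨pad n ((core x.1).map shift) (h2 _) (hsum _ x.2), ?_⟩) ?_
  · intro h5
    have h : 5 ∈ core (pad n ((core x.1).map shift) (h2 _) (hsum _ x.2)) :=
      Multiset.mem_filter.2 ⟨h5, by norm_num⟩
    rw [core_pad] at h
    obtain ⟨s, -, hs⟩ := Multiset.mem_map.1 h
    unfold shift at hs
    split_ifs at hs <;> omega
  · intro x y h
    have h' := congrArg core (Subtype.ext_iff.1 h)
    simp only [core_pad] at h'
    exact Subtype.ext (core_injective (Multiset.map_injective shift_injective h'))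

/-! ### Breaking one part into fives and ones -/

/-- The parts different from `1` after one copy of `s` has been broken into `s / 5` fives
and `s % 5` ones. -/
def broken {n : ℕ} (lam : n.Partition) (s : ℕ) : Multiset ℕ :=
  (core lam).erase s + Multiset.replicate (s / 5) 5

lemma two_le_of_mem_broken {n : ℕ} (lam : n.Partition) (s : ℕ) :
    ∀ i ∈ broken lam s, 2 ≤ i := by
  intro i hi
  rcases Multiset.mem_add.1 hi with h | h
  · exact two_le_of_mem_core (Multiset.mem_of_mem_erase h)
  · rw [Multiset.eq_of_mem_replicate h]; norm_num

lemma one_notMem_core {n : ℕ} (lam : n.Partition) : 1 ∉ core lam := by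
  simp [core]

lemma broken_sum_le {n : ℕ} (lam : n.Partition) (s : ℕ) (hs : s ∈ lam.parts) :
    (broken lam s).sum ≤ n := by
  have h := core_sum lam
  simp only [broken, Multiset.sum_add, Multiset.sum_replicate, smul_eq_mul]
  by_cases h1 : s = 1
  · subst h1
    rw [Multiset.erase_of_notMem (one_notMem_core lam)]
    omega
  · have := Multiset.sum_erase (s := core lam) (Multiset.mem_filter.2 ⟨hs, h1⟩)
    omega

lemma sum_distinct_le (n : ℕ) :
    ∑ lam : {lam : n.Partition // 5 ∉ lam.parts}, lam.1.parts.toFinset.card ≤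
      5 * Nat.card n.Partition := by
  have hcard : Nat.card ((lam : {lam : n.Partition // 5 ∉ lam.parts}) × lam.1.parts.toFinset) =
      ∑ lam : {lam : n.Partition // 5 ∉ lam.parts}, lam.1.parts.toFinset.card := by
    rw [Nat.card_sigma]
    exact Finset.sum_congr rfl fun x _ => by rw [Nat.card_eq_fintype_card, Fintype.card_coe]
  have hcard' : Nat.card (Fin 5 × n.Partition) = 5 * Nat.card n.Partition := by
    simp
  rw [← hcard, ← hcard']
  refine Nat.card_le_card_of_injective
    (fun x => (⟨x.2.1 % 5, Nat.mod_lt _ (by norm_num)⟩,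
      pad n (broken x.1.1 x.2.1) (two_le_of_mem_broken _ _)
        (broken_sum_le _ _ (Multiset.mem_toFinset.1 x.2.2)))) ?_
  rintro ⟨⟨x, hx⟩, ⟨s, hs⟩⟩ ⟨⟨y, hy⟩, ⟨t, ht⟩⟩ h
  simp only [Prod.mk.injEq, Fin.mk.injEq] at h
  obtain ⟨hmod, hpad⟩ := h
  have hb := congrArg core hpad
  simp only [core_pad] at hb
  -- without fives in the partition, the fives in the result count `s / 5`
  have hcount : ∀ (z : n.Partition) (u : ℕ), 5 ∉ z.parts → (broken z u).count 5 = u / 5 := by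
    intro z u hz
    have : 5 ∉ (core z).erase u := fun h =>
      hz (Multiset.mem_filter.1 (Multiset.mem_of_mem_erase h)).1
    simp [broken, Multiset.count_eq_zero_of_notMem this]
  have hdiv : s / 5 = t / 5 := by
    rw [← hcount x s hx, ← hcount y t hy, hb]
  obtain rfl : s = t := by omega
  have he : (core x).erase s = (core y).erase s := add_right_cancel hb
  have hc : core x = core y := by
    by_cases h1 : s = 1
    · subst h1
      rwa [Multiset.erase_of_notMem (one_notMem_core x),
        Multiset.erase_of_notMem (one_notMem_core y)] at he
    · have hsx : s ∈ core x := Multiset.mem_filter.2 ⟨Multiset.mem_toFinset.1 hs, h1⟩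
      have hsy : s ∈ core y := Multiset.mem_filter.2 ⟨Multiset.mem_toFinset.1 ht, h1⟩
      rw [← Multiset.cons_erase hsx, ← Multiset.cons_erase hsy, he]
  obtain rfl := core_injective hc
  rfl

/-! ### Partitions with few distinct part sizes -/

/-- A multiset with at most `K` distinct elements, whose elements and multiplicities are at most
`n`, is described by `K` pairs (multiplicity, element);
surplus pairs have multiplicity `0`. -/
lemma exists_encoding (n K : ℕ) (m : Multiset ℕ) (hm : m.toFinset.card ≤ K)
    (hc : ∀ i, m.count i ≤ n) (hle : ∀ i ∈ m, i ≤ n) :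
    ∃ f : Fin K → Fin (n + 1) × Fin (n + 1),
      m = ∑ i, Multiset.replicate ((f i).1 : ℕ) ((f i).2 : ℕ) := by
  induction K generalizing m with
  | zero =>
    have : m = 0 := by simpa using hm
    exact ⟨Fin.elim0, by simpa using this⟩
  | succ K ih =>
    rcases m.empty_or_exists_mem with rfl | ⟨s, hs⟩
    · exact ⟨fun _ => (0, 0), by simp⟩
    · have hcard : (m.filter (· ≠ s)).toFinset.card ≤ K := by
        rw [Multiset.toFinset_filter, Finset.filter_ne',
          Finset.card_erase_of_mem (Multiset.mem_toFinset.2 hs)]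
        omega
      obtain ⟨f, hf⟩ := ih (m.filter (· ≠ s)) hcard
        (fun i => (Multiset.count_le_of_le i (Multiset.filter_le _ _)).trans (hc i))
        (fun i hi => hle i (Multiset.mem_filter.1 hi).1)
      refine ⟨Fin.cons (⟨m.count s, Nat.lt_succ_of_le (hc s)⟩,
        ⟨s, Nat.lt_succ_of_le (hle s hs)⟩) f, ?_⟩
      rw [Fin.sum_univ_succ]
      simp only [Fin.cons_zero, Fin.cons_succ]
      rw [← hf, ← Multiset.filter_eq' m s]
      exact (Multiset.filter_add_not (· = s) m).symm

lemma card_few_le (n K : ℕ) :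
    Nat.card {lam : n.Partition // lam.parts.toFinset.card ≤ K} ≤ (n + 1) ^ (2 * K) := by
  have h : Nat.card (Fin K → Fin (n + 1) × Fin (n + 1)) = (n + 1) ^ (2 * K) := by
    simp [Nat.card_eq_fintype_card, pow_mul, sq]
  rw [← h]
  have hcard : ∀ lam : n.Partition, lam.parts.card ≤ n := fun lam => by
    have := Multiset.card_nsmul_le_sum (s := lam.parts) (a := 1) fun i hi => lam.parts_pos hi
    rwa [lam.parts_sum, smul_eq_mul, mul_one] at this
  choose f hf using fun lam : {lam : n.Partition // lam.parts.toFinset.card ≤ K} =>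
    exists_encoding n K lam.1.parts lam.2
      (fun i => (Multiset.count_le_card i _).trans (hcard lam.1))
      (fun i hi => (Multiset.le_sum_of_mem hi).trans lam.1.parts_sum.le)
  refine Nat.card_le_card_of_injective f fun x y hxy => ?_
  apply Subtype.ext
  ext1
  rw [hf x, hf y, hxy]

/-! ### Superpolynomial growth of the partition function -/

/-- Distinct subsets of `{2, …, t + 1}` are the parts `≠ 1` of distinct partitions. -/
lemma two_pow_le (n t : ℕ) (h : t * (t + 1) ≤ n) : 2 ^ t ≤ Nat.card n.Partition := by
  have hc : Nat.card (Finset (Fin t)) = 2 ^ t := by simp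
  rw [← hc]
  have h2 : ∀ S : Finset (Fin t), ∀ i ∈ S.val.map (fun i : Fin t => (i : ℕ) + 2), 2 ≤ i := by
    intro S i hi
    obtain ⟨s, -, rfl⟩ := Multiset.mem_map.1 hi
    omega
  have hsum : ∀ S : Finset (Fin t), (S.val.map (fun i : Fin t => (i : ℕ) + 2)).sum ≤ n := by
    intro S
    calc (S.val.map (fun i : Fin t => (i : ℕ) + 2)).sum = ∑ i ∈ S, ((i : ℕ) + 2) := rfl
      _ ≤ S.card • (t + 1) := Finset.sum_le_card_nsmul _ _ _ fun i _ => by omega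
      _ ≤ t * (t + 1) := by
        rw [smul_eq_mul]
        exact Nat.mul_le_mul_right _ (by simpa using S.card_le_univ)
      _ ≤ n := h
  refine Nat.card_le_card_of_injective (fun S => pad n _ (h2 S) (hsum S)) fun S T hST => ?_
  have h' := congrArg core hST
  simp only [core_pad] at h'
  refine Finset.val_injective (Multiset.map_injective (fun a b hab => ?_) h')
  exact Fin.ext (by simpa using hab)

lemma tendsto_few (K : ℕ) :
    Tendsto (fun n : ℕ => ((n : ℝ) + 1) ^ (2 * K) / (Nat.card n.Partition : ℝ)) atTop (𝓝 0) := by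
  have h1 : Tendsto (fun t : ℕ => ((t : ℝ)) ^ (4 * K) / (2 : ℝ) ^ t) atTop (𝓝 0) :=
    (isLittleO_pow_const_const_pow_of_one_lt (R := ℝ) (4 * K)
      (by norm_num : (1 : ℝ) < 2)).tendsto_div_nhds_zero
  have hsq : Tendsto (fun n : ℕ => Nat.sqrt n + 1) atTop atTop := by
    refine tendsto_atTop.2 fun b => ?_
    filter_upwards [eventually_ge_atTop (b * b)] with n hn
    exact (Nat.le_sqrt.2 hn).trans (Nat.le_succ _)
  have h2 := (h1.comp hsq).const_mul 4
  rw [mul_zero] at h2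
  refine squeeze_zero' (Eventually.of_forall fun n => by positivity) ?_ h2
  filter_upwards [eventually_ge_atTop 1] with n hn
  obtain ⟨t, ht⟩ : ∃ t, Nat.sqrt n = t + 1 :=
    Nat.exists_eq_add_one.2 (Nat.sqrt_pos.2 hn)
  have hle : t * (t + 1) ≤ n := by
    have := Nat.sqrt_le n
    rw [ht] at this
    nlinarith
  have hlt : n + 1 ≤ (t + 2) ^ 2 := by
    have := Nat.lt_succ_sqrt' n
    rwa [ht] at this
  have hp : (2 : ℝ) ^ t ≤ Nat.card n.Partition := by exact_mod_cast two_pow_le n t hle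
  have hn' : (n : ℝ) + 1 ≤ ((t : ℝ) + 2) ^ 2 := by exact_mod_cast hlt
  simp only [Function.comp_apply, ht]
  calc ((n : ℝ) + 1) ^ (2 * K) / (Nat.card n.Partition : ℝ)
      ≤ (((t : ℝ) + 2) ^ 2) ^ (2 * K) / (2 : ℝ) ^ t := by gcongr
    _ = 4 * (((t + 1 + 1 : ℕ) : ℝ) ^ (4 * K) / (2 : ℝ) ^ (t + 1 + 1)) := by
      rw [← pow_mul, show 2 * (2 * K) = 4 * K by ring, pow_succ (2 : ℝ), pow_succ (2 : ℝ)]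
      push_cast
      rw [show (t : ℝ) + 1 + 1 = t + 2 by ring]
      field_simp
      norm_num

/-! ### Conclusion -/

lemma mul_card_bad_le (n K : ℕ) :
    K * Nat.card {lam : n.Partition // ¬ AdmissiblePartition lam} ≤
      5 * Nat.card n.Partition + K * (n + 1) ^ (2 * K) := by
  classical
  have h1 := card_bad_le n
  have h2 := sum_distinct_le n
  have h3 := card_few_le n K
  have h4 : K * Nat.card {lam : n.Partition // 5 ∉ lam.parts} ≤
      ∑ lam : {lam : n.Partition // 5 ∉ lam.parts}, lam.1.parts.toFinset.card +
        K * Nat.card {lam : n.Partition // lam.parts.toFinset.card ≤ K} := by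
    have h5 : ∑ lam : {lam : n.Partition // 5 ∉ lam.parts},
        (if lam.1.parts.toFinset.card ≤ K then 1 else 0) ≤
          Nat.card {lam : n.Partition // lam.parts.toFinset.card ≤ K} := by
      rw [← Finset.sum_filter, ← Finset.card_eq_sum_ones, ← Fintype.card_subtype,
        ← Nat.card_eq_fintype_card]
      exact Nat.card_le_card_of_injective (fun x => ⟨x.1.1, x.2⟩) fun x y h =>
        Subtype.ext (Subtype.ext (Subtype.mk.inj h))
    refine le_trans ?_ (Nat.add_le_add_left (Nat.mul_le_mul_left K h5) _)
    rw [Finset.mul_sum, ← Finset.sum_add_distrib, Nat.card_eq_fintype_card, mul_comm,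
      ← smul_eq_mul, ← Finset.card_univ]
    refine Finset.card_nsmul_le_sum _ _ _ fun x _ => ?_
    split_ifs <;> omega
  calc K * Nat.card {lam : n.Partition // ¬ AdmissiblePartition lam}
      ≤ K * Nat.card {lam : n.Partition // 5 ∉ lam.parts} := Nat.mul_le_mul_left _ h1
    _ ≤ _ := h4
    _ ≤ _ := Nat.add_le_add h2 (Nat.mul_le_mul_left _ h3)

lemma tendsto_bad :
    Tendsto (fun n : ℕ => (Nat.card {lam : n.Partition // ¬ AdmissiblePartition lam} : ℝ) /
      (Nat.card n.Partition : ℝ)) atTop (𝓝 0) := by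
  rw [Metric.tendsto_atTop']
  intro ε hε
  -- `5 / K` and the contribution of few part sizes are each below `ε / 2`
  obtain ⟨K, hK⟩ := exists_nat_gt (10 / ε)
  have hK0 : (0 : ℝ) < K := lt_trans (by positivity) hK
  obtain ⟨N, hN⟩ := eventually_atTop.1
    ((tendsto_few K).eventually (gt_mem_nhds (half_pos hε)))
  refine ⟨N, fun n hn => ?_⟩
  have hfew := hN n hn.le
  have hp : (0 : ℝ) < Nat.card n.Partition := by exact_mod_cast Nat.card_pos
  have hb : (K : ℝ) * Nat.card {lam : n.Partition // ¬ AdmissiblePartition lam} ≤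
      5 * Nat.card n.Partition + K * ((n : ℝ) + 1) ^ (2 * K) := by
    exact_mod_cast mul_card_bad_le n K
  rw [div_lt_iff₀ hε] at hK
  rw [div_lt_iff₀ hp] at hfew
  rw [Real.dist_0_eq_abs, abs_of_nonneg (by positivity), div_lt_iff₀ hp]
  have h1 := mul_lt_mul_of_pos_left hfew hK0
  have h2 := mul_lt_mul_of_pos_right hK hp
  refine lt_of_mul_lt_mul_left (a := (K : ℝ)) ?_ hK0.le
  nlinarith

end AlmostAdmissible

/-- Almost all finite abelian 2-groups are admissible: the proportion of partitions of `n` that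
are admissible tends to 1 as `n → ∞`. -/
theorem stmt14 :
    Filter.Tendsto (fun n : ℕ =>
        (Nat.card {lam : n.Partition // AdmissiblePartition lam} : ℝ) /
          (Nat.card (n.Partition) : ℝ)) Filter.atTop (nhds 1) := by
  classical
  have h := AlmostAdmissible.tendsto_bad.const_sub 1
  rw [sub_zero] at h
  refine h.congr fun n => ?_
  have hp : (Nat.card n.Partition : ℝ) ≠ 0 := by exact_mod_cast Nat.card_pos.ne'
  have hsum : (Nat.card {lam : n.Partition // AdmissiblePartition lam} : ℝ) +
      Nat.card {lam : n.Partition // ¬ AdmissiblePartition lam} = Nat.card n.Partition := by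
    have := Nat.card_congr (Equiv.sumCompl (fun lam : n.Partition => AdmissiblePartition lam))
    rw [Nat.card_sum] at this
    exact_mod_cast this
  rw [← hsum] at hp ⊢
  field_simp
  ring
end

section
/- Let p be an odd prime and let n ≥ 1 and s ≥ 1 be integers. Then there exists a 1-difference basis in Z_{p^s}^{2n} (the direct product of 2n copies of the cyclic group of order p^s) of size at most p^{sn} + 9·p^{(s − 1/2)n}. Consequently, lim_{n → ∞} η₁(Z_{p^s}^{2n}) / p^{sn} = 1. -/
/-!
Write `Z = ZMod (p ^ s)` and let `R` be the Galois ring of characteristic `p ^ s` and rank `n`: its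
additive group is `Zⁿ`, and every element is either a unit or a multiple of `p`
(`exists_galoisRing`). Identify `Z^(2n)` with `R × R`. Since `2` is invertible, the differences of
the parabola `{(t, t²) : t ∈ R}`, a set of `p ^ (s n)` elements, contain every `(a, b)` with `a` a
unit. The remaining elements form the subgroup `pR × R` of order at most `p ^ ((2s - 1) n)`.

An abelian `p`-group `N` is the difference set of some subset of size at most `4 √|N|`
(`exists_cover_of_pGroup`): the union of a subgroup and a transversal works, once the middle
factor of order `p` (present when `|N|` is not a square) is split in base about `√p`. Adding such a
set for `N = pR × R` to the parabola gives a difference basis of size at most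
`p ^ (s n) + 4 p ^ ((s - 1/2) n)` (`exists_basis`).

For the limit, this bound is combined with `|G| ≤ |B|²`, valid for every difference basis `B`.
-/

open Filter Topology

/-! ### Difference covers of abelian `p`-groups -/

/-- If `H ≤ K ≤ G` and the powers `k⁰, …, k^(q-1)` meet every coset of `H` in `K`, then the
interval `[0, q)` can be split in base `u`: with `T` a transversal of `K`, the elements `h * kⁱ`
(`i < u`) and `(t * k ^ (u * j))⁻¹` (`t ∈ T`, `j < v`) have all of `G` as their quotients. -/
lemma exists_cover_of_chain {G : Type*} [CommGroup G] [Finite G] (H K : Subgroup G) (k : G)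
    (q u v : ℕ) (hk : ∀ x ∈ K, ∃ i < q, x * (k ^ i)⁻¹ ∈ H) (hq : q ≤ u * v) (hu : 0 < u) :
    ∃ D : Set G, (∀ x, ∃ a ∈ D, ∃ b ∈ D, a / b = x) ∧
      D.ncard ≤ Nat.card H * u + K.index * v := by
  let f : H × Fin u → G := fun z => z.1 * k ^ (z.2 : ℕ)
  let g : (G ⧸ K) × Fin v → G := fun t => (t.1.out * k ^ (u * (t.2 : ℕ)))⁻¹
  refine ⟨Set.range f ∪ Set.range g, fun x => ?_, ?_⟩
  · obtain ⟨i, hi, hiH⟩ := hk ((x : G ⧸ K).out⁻¹ * x)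
      (QuotientGroup.eq.1 (QuotientGroup.out_eq' (x : G ⧸ K)))
    refine ⟨f (⟨_, hiH⟩, ⟨i % u, Nat.mod_lt _ hu⟩), Or.inl ⟨_, rfl⟩,
      g ((x : G ⧸ K), ⟨i / u, Nat.div_lt_of_lt_mul (hi.trans_le hq)⟩), Or.inr ⟨_, rfl⟩, ?_⟩
    have hki : k ^ i = k ^ (u * (i / u)) * k ^ (i % u) := by rw [← pow_add, Nat.div_add_mod]
    simp only [f, g, hki]
    rw [div_inv_eq_mul]
    generalize (x : G ⧸ K).out = y
    generalize k ^ (u * (i / u)) = c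
    generalize k ^ (i % u) = d
    calc _ = (y⁻¹ * y) * (c⁻¹ * c) * (d⁻¹ * d) * x := by
          rw [mul_inv]; ac_rfl
      _ = x := by simp
  · refine (Set.ncard_union_le _ _).trans (add_le_add ?_ ?_)
    · rw [← Nat.card_coe_set_eq]
      refine (Finite.card_range_le f).trans ?_
      simp
    · rw [← Nat.card_coe_set_eq]
      refine (Finite.card_range_le g).trans ?_
      simp [Subgroup.index]

/-- An abelian `p`-group has a difference cover of size at most `4 * √|G|`. For order `p ^ (2k)`
take `H = K` of order `p ^ k`; for order `p ^ (2k+1)` take `H ≤ K` of orders `p ^ k` and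
`p ^ (k+1)`, and split the cyclic quotient `K / H` of order `p` with `u = v = ⌊√p⌋ + 1`. -/
lemma exists_cover_of_pGroup {G : Type*} [CommGroup G] [Finite G] (p : ℕ) [Fact p.Prime] (m : ℕ)
    (hG : Nat.card G = p ^ m) :
    ∃ D : Set G, (∀ x, ∃ a ∈ D, ∃ b ∈ D, a / b = x) ∧
      (D.ncard : ℝ) ≤ 4 * √(Nat.card G) := by
  have hp : p.Prime := Fact.out
  have hp0 : 0 < p := hp.pos
  rcases Nat.even_or_odd' m with ⟨k, rfl | rfl⟩
  · obtain ⟨H, hH⟩ := Sylow.exists_subgroup_card_pow_prime (G := G) p (n := k)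
      (hG ▸ pow_dvd_pow p (by omega))
    have hidx : H.index = p ^ k := by
      have := H.card_mul_index
      rw [hH, hG, two_mul, pow_add] at this
      exact Nat.eq_of_mul_eq_mul_left (pow_pos hp0 k) this
    obtain ⟨D, hD, hc⟩ := exists_cover_of_chain H H 1 1 1 1
      (fun x hx => ⟨0, one_pos, by simpa using hx⟩) le_rfl one_pos
    refine ⟨D, hD, ?_⟩
    rw [hG, hH, hidx] at *
    have hs : √(((p ^ (2 * k) : ℕ) : ℝ)) = p ^ k := by
      rw [mul_comm]; push_cast; rw [pow_mul]; exact Real.sqrt_sq (by positivity)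
    rw [hs]
    have : (D.ncard : ℝ) ≤ p ^ k * 1 + p ^ k * 1 := by exact_mod_cast hc
    have : (0 : ℝ) ≤ p ^ k := by positivity
    linarith
  · obtain ⟨H, hH⟩ := Sylow.exists_subgroup_card_pow_prime (G := G) p (n := k)
      (hG ▸ pow_dvd_pow p (by omega))
    obtain ⟨K, hK, hHK⟩ := Sylow.exists_subgroup_card_pow_succ (G := G) (p := p) (n := k)
      (hG ▸ pow_dvd_pow p (by omega)) hH
    have hidx : K.index = p ^ k := by
      have := K.card_mul_index
      rw [hK, hG, show 2 * k + 1 = (k + 1) + k by ring, pow_add p (k + 1) k] at this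
      exact Nat.eq_of_mul_eq_mul_left (pow_pos hp0 _) this
    have hquot : Nat.card (K ⧸ H.subgroupOf K) = p := by
      have := (H.subgroupOf K).card_mul_index
      rw [Nat.card_congr (Subgroup.subgroupOfEquivOfLe hHK).toEquiv, hH, hK, pow_succ] at this
      exact Nat.eq_of_mul_eq_mul_left (pow_pos hp0 _) this
    have := isCyclic_of_prime_card hquot
    obtain ⟨g, hg⟩ := IsCyclic.exists_generator (α := K ⧸ H.subgroupOf K)
    obtain ⟨c, rfl⟩ := QuotientGroup.mk_surjective g
    have hk : ∀ x ∈ K, ∃ i < p, x * ((c : G) ^ i)⁻¹ ∈ H := by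
      intro x hx
      classical
      have h1 := mem_zpowers_iff_mem_range_orderOf.1 (hg ((⟨x, hx⟩ : K) : K ⧸ H.subgroupOf K))
      obtain ⟨i, hi, hix⟩ := Finset.mem_image.1 h1
      refine ⟨i, ?_, ?_⟩
      · have := orderOf_dvd_natCard ((c : K ⧸ H.subgroupOf K))
        rw [hquot] at this
        exact (Finset.mem_range.1 hi).trans_le (Nat.le_of_dvd hp0 this)
      · have h2 : ((c ^ i : K) : K ⧸ H.subgroupOf K) = ((⟨x, hx⟩ : K) : K ⧸ H.subgroupOf K) := by
          simpa using hix
        have h3 := QuotientGroup.eq.1 h2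
        rw [Subgroup.mem_subgroupOf] at h3
        simpa [mul_comm] using h3
    obtain ⟨D, hD, hc⟩ := exists_cover_of_chain H K c p (p.sqrt + 1) (p.sqrt + 1) hk
      (Nat.lt_succ_sqrt p).le (Nat.succ_pos _)
    refine ⟨D, hD, ?_⟩
    rw [hH, hidx] at hc
    have hs : √((Nat.card G : ℕ) : ℝ) = p ^ k * √p := by
      rw [hG]; push_cast; rw [pow_succ, mul_comm 2, pow_mul, Real.sqrt_mul (by positivity),
        Real.sqrt_sq (by positivity)]
    rw [hs]
    have h1 : (D.ncard : ℝ) ≤ p ^ k * (p.sqrt + 1) + p ^ k * (p.sqrt + 1) := by exact_mod_cast hc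
    have h2 : (p.sqrt : ℝ) ≤ √p := Real.nat_sqrt_le_real_sqrt
    have h3 : (1 : ℝ) ≤ √p := Real.one_le_sqrt.2 (by exact_mod_cast hp.one_le)
    have h4 : (0 : ℝ) ≤ p ^ k := by positivity
    nlinarith [mul_le_mul_of_nonneg_left h2 h4, mul_le_mul_of_nonneg_left h3 h4]

/-! ### The Galois ring of characteristic `p ^ s` and rank `n` -/

open Polynomial in
lemma exists_monic_irreducible (p : ℕ) [Fact p.Prime] (n : ℕ) (hn : n ≠ 0) :
    ∃ f : (ZMod p)[X], f.Monic ∧ Irreducible f ∧ f.natDegree = n := by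
  let pb := Field.powerBasisOfFiniteOfSeparable (ZMod p) (GaloisField p n)
  have hi : IsIntegral (ZMod p) pb.gen := pb.isIntegral_gen
  exact ⟨minpoly _ pb.gen, minpoly.monic hi, minpoly.irreducible hi, by
    rw [pb.natDegree_minpoly, ← pb.finrank, GaloisField.finrank p hn]⟩

open Polynomial in
/-- `Zⁿ` with `Z = ZMod (p ^ s)` carries a commutative ring structure in which every nonunit is a
multiple of `p`. The ring is `Z[X] / (f)`, where `f` is a monic lift of an irreducible polynomial
of degree `n` over `𝔽_p`. -/
lemma exists_galoisRing (p : ℕ) [Fact p.Prime] (s n : ℕ) (hs : 1 ≤ s) (hn : n ≠ 0) :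
    ∃ (R : Type) (_ : CommRing R) (_ : R ≃+ (Fin n → ZMod (p ^ s))),
      ∀ a : R, IsUnit a ∨ ∃ w, a = p * w := by
  obtain ⟨f₀, hf₀, hirr, hdeg⟩ := exists_monic_irreducible p n hn
  have hps : p ∣ p ^ s := dvd_pow_self p (by omega)
  let φ : ZMod (p ^ s) →+* ZMod p := ZMod.castHom hps (ZMod p)
  have hφ : Function.Surjective φ := ZMod.castHom_surjective hps
  have hsurj : ∀ h : (ZMod p)[X], ∃ g : (ZMod (p ^ s))[X], g.map φ = h :=
    Polynomial.map_surjective φ hφ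
  obtain ⟨f, hff, hfdeg, hf⟩ := lifts_and_natDegree_eq_and_monic
    (mem_lifts_of_surjective hφ f₀) hf₀
  have hker : ∀ g : (ZMod (p ^ s))[X], g.map φ = 0 → ∃ w, g = C (p : ZMod (p ^ s)) * w := by
    intro g hg
    have hd : C (p : ZMod (p ^ s)) ∣ g := by
      rw [C_dvd_iff_dvd_coeff]
      intro i
      have h0 : φ (g.coeff i) = 0 := by rw [← coeff_map, hg, coeff_zero]
      have : NeZero (p ^ s) := ⟨pow_ne_zero _ (Fact.out : p.Prime).ne_zero⟩
      rw [← ZMod.natCast_zmod_val (g.coeff i), map_natCast, ZMod.natCast_eq_zero_iff] at h0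
      rw [← ZMod.natCast_zmod_val (g.coeff i)]
      exact_mod_cast Nat.cast_dvd_cast h0
    exact hd
  have hpR : (AdjoinRoot.mk f) (C (p : ZMod (p ^ s))) = (p : AdjoinRoot f) := by simp
  refine ⟨AdjoinRoot f, inferInstance, ?_, ?_⟩
  · have e := (AdjoinRoot.powerBasis' hf).basis.equivFun.toAddEquiv
    rwa [AdjoinRoot.powerBasis'_dim, hfdeg, hdeg] at e
  · intro a
    obtain ⟨g, rfl⟩ := AdjoinRoot.mk_surjective a
    by_cases hdvd : f₀ ∣ g.map φ
    · right
      obtain ⟨h₀, hh₀⟩ := hdvd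
      obtain ⟨h, rfl⟩ := hsurj h₀
      obtain ⟨w, hw⟩ := hker (g - f * h) (by
        rw [Polynomial.map_sub, Polynomial.map_mul, hff, hh₀, sub_self])
      refine ⟨AdjoinRoot.mk f w, ?_⟩
      rw [← hpR, ← map_mul, ← hw]
      simp
    · left
      -- A Bézout identity modulo `p` lifts to an identity `v * g = 1 + p * w` in the quotient,
      -- and `p` is nilpotent there.
      obtain ⟨u₀, v₀, huv⟩ := (hirr.coprime_iff_not_dvd).2 hdvd
      obtain ⟨u, rfl⟩ := hsurj u₀
      obtain ⟨v, rfl⟩ := hsurj v₀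
      obtain ⟨w, hw⟩ := hker (u * f + v * g - 1) (by
        simp only [Polynomial.map_sub, Polynomial.map_add, Polynomial.map_mul, hff, huv,
          Polynomial.map_one, sub_self])
      have h1 : AdjoinRoot.mk f v * AdjoinRoot.mk f g = 1 + p * AdjoinRoot.mk f w := by
        have := congrArg (AdjoinRoot.mk f) hw
        rw [map_mul, hpR] at this
        rw [← this]
        simp
      have hnil : IsNilpotent ((p : AdjoinRoot f) * AdjoinRoot.mk f w) := by
        refine ⟨s, ?_⟩
        have h0 : (p : AdjoinRoot f) ^ s = 0 := by
          rw [← hpR, ← map_pow, ← C_pow, ← Nat.cast_pow, ZMod.natCast_self]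
          simp
        rw [mul_pow, h0, zero_mul]
      exact isUnit_of_mul_isUnit_right (h1 ▸ hnil.isUnit_one_add)

/-! ### The difference basis -/

lemma isDiffBasis_one_iff {G : Type*} [AddCommGroup G] [Finite G] (B : Set G) :
    IsDiffBasis 1 B ↔ ∀ x, ∃ a ∈ B, ∃ b ∈ B, a - b = x := by
  refine forall_congr' fun x => ?_
  rw [Nat.one_le_iff_ne_zero, ← Nat.pos_iff_ne_zero, Finite.card_pos_iff, nonempty_subtype]
  simp only [Prod.exists]
  constructor
  · rintro ⟨a, b, ha, hb, h⟩
    exact ⟨a, ha, b, hb, h⟩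
  · rintro ⟨a, ha, b, hb, h⟩
    exact ⟨a, b, ha, hb, h⟩

/-- Additive form of `exists_cover_of_pGroup`, for a subgroup `N` of a `p`-group. -/
lemma exists_cover_addSubgroup {G : Type*} [AddCommGroup G] [Finite G] (p : ℕ) [Fact p.Prime]
    (m : ℕ) (hG : Nat.card G = p ^ m) (N : AddSubgroup G) :
    ∃ D : Set G, (∀ x ∈ N, ∃ a ∈ D, ∃ b ∈ D, a - b = x) ∧
      (D.ncard : ℝ) ≤ 4 * √(Nat.card N) := by
  obtain ⟨j, -, hj⟩ := (Nat.dvd_prime_pow Fact.out).1 (hG ▸ N.card_addSubgroup_dvd_card)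
  obtain ⟨D, hD, hc⟩ := exists_cover_of_pGroup (G := Multiplicative N) p j hj
  refine ⟨(fun x : Multiplicative N => ((Multiplicative.toAdd x : N) : G)) '' D,
    fun x hx => ?_, ?_⟩
  · obtain ⟨a, ha, b, hb, h⟩ := hD (Multiplicative.ofAdd ⟨x, hx⟩)
    refine ⟨_, ⟨a, ha, rfl⟩, _, ⟨b, hb, rfl⟩, ?_⟩
    have := congrArg (fun y : Multiplicative N => ((Multiplicative.toAdd y : N) : G)) h
    simpa using this
  · refine le_trans ?_ hc
    exact_mod_cast Set.ncard_image_le (Set.toFinite D)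

/-- The subgroup `p Zⁿ × Zⁿ`. -/
def pMulSubgroup (p s n : ℕ) :
    AddSubgroup ((Fin n → ZMod (p ^ s)) × (Fin n → ZMod (p ^ s))) :=
  (nsmulAddMonoidHom (α := Fin n → ZMod (p ^ s)) p).range.prod ⊤

/-- Each coordinate of an element of `p Zⁿ` is `p * r` with `r < p ^ (s - 1)`. -/
lemma card_pMulSubgroup_le (p s n : ℕ) (hp : 0 < p) (hs : 1 ≤ s) :
    Nat.card (pMulSubgroup p s n) ≤ p ^ ((2 * s - 1) * n) := by
  have : NeZero (p ^ s) := ⟨(pow_pos hp s).ne'⟩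
  let F : (Fin n → Fin (p ^ (s - 1))) × (Fin n → ZMod (p ^ s)) →
      (Fin n → ZMod (p ^ s)) × (Fin n → ZMod (p ^ s)) :=
    fun z => (fun i => p * ((z.1 i : ℕ) : ZMod (p ^ s)), z.2)
  have hsub : (pMulSubgroup p s n : Set _) ⊆ Set.range F := by
    rintro ⟨a, b⟩ h
    obtain ⟨⟨w, rfl⟩, -⟩ := AddSubgroup.mem_prod.1 h
    refine ⟨(fun i => ⟨(w i).val % p ^ (s - 1), Nat.mod_lt _ (pow_pos hp _)⟩, b), ?_⟩
    refine Prod.ext (funext fun i => ?_) rfl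
    have hps : p ^ s = p * p ^ (s - 1) := by rw [← pow_succ', Nat.sub_add_cancel hs]
    have h1 : (((p * ((w i).val % p ^ (s - 1)) : ℕ)) : ZMod (p ^ s))
        = ((p * (w i).val : ℕ) : ZMod (p ^ s)) := by
      rw [← Nat.mul_mod_mul_left, ← hps, ZMod.natCast_mod]
    simpa [F, nsmul_eq_mul] using h1
  have h1 : Nat.card (pMulSubgroup p s n) ≤ Nat.card (Set.range F) :=
    Nat.card_mono (Set.toFinite _) hsub
  refine h1.trans ((Finite.card_range_le F).trans (le_of_eq ?_))
  simp only [Nat.card_prod, Nat.card_fun, Nat.card_fin, Nat.card_zmod]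
  rw [← pow_mul, ← pow_mul, ← pow_add, ← add_mul]
  congr 2
  omega

/-- The parabola `{(t, t²)}` in `R × R`, with `R` the Galois ring, together with a difference cover
of `pR × R`. -/
lemma exists_basis_prod (p : ℕ) [Fact p.Prime] (hodd : Odd p) (s n : ℕ) (hs : 1 ≤ s) (hn : n ≠ 0) :
    ∃ B : Set ((Fin n → ZMod (p ^ s)) × (Fin n → ZMod (p ^ s))),
      (∀ x, ∃ a ∈ B, ∃ b ∈ B, a - b = x) ∧
      (B.ncard : ℝ) ≤ (p : ℝ) ^ (s * n) + 4 * (p : ℝ) ^ (((s : ℝ) - 1 / 2) * (n : ℝ)) := by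
  have hp : p.Prime := Fact.out
  have : NeZero (p ^ s) := ⟨(pow_pos hp.pos s).ne'⟩
  obtain ⟨R, _, e, hR⟩ := exists_galoisRing p s n hs hn
  obtain ⟨D, hD, hDc⟩ := exists_cover_addSubgroup p (2 * s * n)
    (by simp only [Nat.card_prod, Nat.card_fun, Nat.card_fin, Nat.card_zmod]
        rw [← pow_mul, ← pow_add]; congr 1; ring) (pMulSubgroup p s n)
  -- `p ^ s = 2k + 1` vanishes in `R`, so `-k` is the inverse of `2`.
  obtain ⟨c, hc⟩ : ∃ c : R, 2 * c = 1 := by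
    obtain ⟨k, hk⟩ := hodd.pow (n := s)
    have h0 : ((p ^ s : ℕ) : R) = 0 := by
      apply e.injective
      rw [map_zero, ← nsmul_one, map_nsmul]
      ext i
      simp [nsmul_eq_mul]
    rw [hk] at h0
    push_cast at h0
    exact ⟨-k, by linear_combination -h0⟩
  refine ⟨Set.range (fun t : R => (e t, e (t ^ 2))) ∪ D, fun x => ?_, ?_⟩
  · obtain ⟨x₁, x₂⟩ := x
    obtain ⟨a, rfl⟩ := e.surjective x₁
    obtain ⟨b, rfl⟩ := e.surjective x₂
    rcases hR a with ha | ⟨w, rfl⟩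
    -- For a unit `a`, the system `t - r = a`, `t² - r² = b` is solved by
    -- `t, r = (b / a ± a) / 2`.
    · obtain ⟨a', ha'⟩ := ha.exists_right_inv
      refine ⟨_, Or.inl ⟨c * (b * a' + a), rfl⟩, _, Or.inl ⟨c * (b * a' - a), rfl⟩, ?_⟩
      simp only [Prod.mk_sub_mk, ← map_sub]
      refine Prod.ext (congrArg e ?_) (congrArg e ?_)
      · linear_combination a * hc
      · linear_combination (b * a' * a * (2 * c + 1)) * hc + b * ha'
    · obtain ⟨u, hu, v, hv, huv⟩ := hD (e (p * w), e b) (by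
        refine AddSubgroup.mem_prod.2 ⟨⟨e w, ?_⟩, trivial⟩
        rw [← nsmul_eq_mul, map_nsmul]; rfl)
      exact ⟨u, Or.inr hu, v, Or.inr hv, huv⟩
  · have h1 : (Set.range (fun t : R => (e t, e (t ^ 2)))).ncard ≤ p ^ (s * n) := by
      have : Finite R := Finite.of_equiv _ e.symm.toEquiv
      rw [← Nat.card_coe_set_eq]
      refine (Finite.card_range_le _).trans (le_of_eq ?_)
      rw [Nat.card_congr e.toEquiv]
      simp [pow_mul]
    have h2 : √(Nat.card (pMulSubgroup p s n)) ≤ (p : ℝ) ^ (((s : ℝ) - 1 / 2) * (n : ℝ)) := by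
      refine Real.sqrt_le_iff.2 ⟨by positivity, ?_⟩
      have h3 : (Nat.card (pMulSubgroup p s n) : ℝ) ≤ (p : ℝ) ^ ((2 * s - 1) * n) := by
        exact_mod_cast card_pMulSubgroup_le p s n hp.pos hs
      refine h3.trans (le_of_eq ?_)
      rw [← Real.rpow_natCast, ← Real.rpow_natCast, ← Real.rpow_mul (by positivity)]
      congr 1
      push_cast [show 1 ≤ 2 * s by omega]
      ring
    have h4 : ((Set.range (fun t : R => (e t, e (t ^ 2))) ∪ D).ncard : ℝ) ≤
        ((Set.range (fun t : R => (e t, e (t ^ 2)))).ncard : ℝ) + D.ncard := by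
      exact_mod_cast Set.ncard_union_le _ _
    have h5 : ((Set.range (fun t : R => (e t, e (t ^ 2)))).ncard : ℝ) ≤ (p : ℝ) ^ (s * n) := by
      exact_mod_cast h1
    linarith

lemma exists_basis (p : ℕ) [Fact p.Prime] (hodd : Odd p) (s n : ℕ) (hs : 1 ≤ s) (hn : n ≠ 0) :
    ∃ B : Set (Fin (2 * n) → ZMod (p ^ s)), B.Finite ∧ IsDiffBasis 1 B ∧
      (Nat.card B : ℝ) ≤ (p : ℝ) ^ (s * n) + 4 * (p : ℝ) ^ (((s : ℝ) - 1 / 2) * (n : ℝ)) := by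
  have : NeZero (p ^ s) := ⟨(pow_pos (Fact.out : p.Prime).pos s).ne'⟩
  obtain ⟨B, hB, hc⟩ := exists_basis_prod p hodd s n hs hn
  let ψ : Fin n ⊕ Fin n ≃ Fin (2 * n) := finSumFinEquiv.trans (finCongr (two_mul n).symm)
  let T : (Fin n → ZMod (p ^ s)) × (Fin n → ZMod (p ^ s)) → (Fin (2 * n) → ZMod (p ^ s)) :=
    fun z i => Sum.elim z.1 z.2 (ψ.symm i)
  refine ⟨T '' B, Set.toFinite _, (isDiffBasis_one_iff _).2 fun x => ?_, ?_⟩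
  · obtain ⟨a, ha, b, hb, h⟩ := hB (fun i => x (ψ (Sum.inl i)), fun i => x (ψ (Sum.inr i)))
    refine ⟨_, ⟨a, ha, rfl⟩, _, ⟨b, hb, rfl⟩, funext fun i => ?_⟩
    obtain ⟨j, rfl⟩ := ψ.surjective i
    obtain ⟨h1, h2⟩ := Prod.ext_iff.1 h
    rcases j with j | j
    · simpa [T] using congrFun h1 j
    · simpa [T] using congrFun h2 j
  · refine le_trans ?_ hc
    rw [Nat.card_coe_set_eq]
    exact_mod_cast Set.ncard_image_le (Set.toFinite B)

/-! ### The limit -/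

lemma card_le_sq_of_isDiffBasis {G : Type*} [AddCommGroup G] [Finite G] {B : Set G}
    (hB : IsDiffBasis 1 B) : Nat.card G ≤ Nat.card B ^ 2 := by
  rw [isDiffBasis_one_iff] at hB
  have hsurj : Function.Surjective (fun z : B × B => (z.1 : G) - z.2) := fun x => by
    obtain ⟨a, ha, b, hb, h⟩ := hB x
    exact ⟨(⟨a, ha⟩, ⟨b, hb⟩), h⟩
  simpa [sq] using Nat.card_le_card_of_surjective _ hsurj

/-- For an odd prime `p` and `n, s ≥ 1`, there is a 1-difference basis in `Z_{p^s}^{2n}` of size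
at most `p^{sn} + 9 p^{(s - 1/2)n}`; consequently `η₁(Z_{p^s}^{2n}) = (1 + o(1)) p^{sn}`. -/
theorem stmt15 (p : ℕ) (hp : p.Prime) (hodd : Odd p) (s : ℕ) (hs : 1 ≤ s) :
    (∀ n : ℕ, 1 ≤ n →
      ∃ B : Set (Fin (2 * n) → ZMod (p ^ s)), B.Finite ∧ IsDiffBasis 1 B ∧
        (Nat.card B : ℝ) ≤ (p : ℝ) ^ (s * n) +
          9 * (p : ℝ) ^ (((s : ℝ) - 1 / 2) * (n : ℝ))) ∧
    Filter.Tendsto (fun n : ℕ => (etaMin (Fin (2 * n) → ZMod (p ^ s)) 1 : ℝ) /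
        (p : ℝ) ^ (s * n)) Filter.atTop (nhds 1) := by
  have : Fact p.Prime := ⟨hp⟩
  have hne : NeZero (p ^ s) := ⟨(pow_pos hp.pos s).ne'⟩
  have hp0 : (0 : ℝ) < p := by exact_mod_cast hp.pos
  refine ⟨fun n hn => ?_, ?_⟩
  · obtain ⟨B, hf, hB, hc⟩ := exists_basis p hodd s n hs (by omega)
    refine ⟨B, hf, hB, hc.trans ?_⟩
    gcongr
    norm_num
  · have hlim : Tendsto (fun n : ℕ => 1 + 4 * ((p : ℝ) ^ (-(1 / 2) : ℝ)) ^ n) atTop (𝓝 1) := by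
      have h := tendsto_pow_atTop_nhds_zero_of_lt_one (r := (p : ℝ) ^ (-(1 / 2) : ℝ))
        (by positivity)
        (Real.rpow_lt_one_of_one_lt_of_neg (by exact_mod_cast hp.one_lt) (by norm_num))
      simpa using (h.const_mul 4).const_add 1
    refine tendsto_of_tendsto_of_tendsto_of_le_of_le' tendsto_const_nhds hlim ?_ ?_
    · filter_upwards [eventually_ge_atTop 1] with n hn
      obtain ⟨B, hf, hB, hc⟩ := exists_basis p hodd s n hs (by omega)
      obtain ⟨B', -, hB', hc'⟩ := Nat.sInf_mem (s := {k : ℕ | ∃ B : Set (Fin (2 * n) → ZMod (p ^ s)),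
        B.Finite ∧ IsDiffBasis 1 B ∧ Nat.card B = k}) ⟨_, B, hf, hB, rfl⟩
      rw [one_le_div (by positivity)]
      have h1 := card_le_sq_of_isDiffBasis hB'
      rw [hc', show Nat.card (Fin (2 * n) → ZMod (p ^ s)) = (p ^ (s * n)) ^ 2 by
        simp [← pow_mul]; congr 1; ring] at h1
      exact_mod_cast (Nat.pow_le_pow_iff_left two_ne_zero).1 h1
    · filter_upwards [eventually_ge_atTop 1] with n hn
      obtain ⟨B, hf, hB, hc⟩ := exists_basis p hodd s n hs (by omega)
      have h1 : etaMin (Fin (2 * n) → ZMod (p ^ s)) 1 ≤ Nat.card B :=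
        Nat.sInf_le ⟨B, hf, hB, rfl⟩
      rw [div_le_iff₀ (by positivity)]
      refine (Nat.cast_le.2 h1).trans (hc.trans (le_of_eq ?_))
      have h2 : (p : ℝ) ^ (((s : ℝ) - 1 / 2) * (n : ℝ)) =
          ((p : ℝ) ^ (-(1 / 2) : ℝ)) ^ n * (p : ℝ) ^ (s * n) := by
        rw [← Real.rpow_natCast, ← Real.rpow_natCast, ← Real.rpow_mul hp0.le, ← Real.rpow_add hp0]
        congr 1
        push_cast
        ring
      rw [h2]
      ring
end

section
/- Let G be a finite abelian group of odd order with |G| > 1. Then lim_{n → ∞} η₁(G^{2n}) / |G|^n = 1, where G^{2n} denotes the direct product of 2n copies of G. -/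
/-!
Counting differences gives `|G| ^ n ≤ η₁(G ^ (2n))`.

For the upper bound, write `G` as a product of groups `ℤ/p^k`, `k ≥ 1`. Each `(ℤ/p^k) ^ n` is the additive
group of the Galois ring `(ℤ/p^k)[X]/(F)`, with `F` monic of degree `n` and irreducible modulo `p`;
its non-units form the ideal `(p)`, of index `p ^ n`. The product of these rings is a commutative
ring `R` with additive group `G ^ n` and at most `c |R| / 2 ^ n` non-units, where `c` does not
depend on `n` (`exists_ring`). As `|R|` is odd, `2` is a unit of `R`, so the parabola
`{(x, x ^ 2)} ⊆ R × R` represents every `(a, b)` with `a` a unit: solve `2 a x = b + a ^ 2`.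
The remaining differences `(a, b)`, with `a` in the set `N` of non-units, are represented by
`N × S ∪ {0} × T` where `S - T = R` (`exists_basis_prod`). Taking for `S` and `T` the elements of
`G ^ n` supported on the first `j` and on the last `n - j` coordinates gives
`η₁(G ^ (2n)) / |G| ^ n ≤ 1 + c |G| ^ j / 2 ^ n + |G| ^ (-j)` (`etaMin_upper`); let `n → ∞`,
then `j → ∞`.
-/

open Filter Topology

open Polynomial in
/-- `R` is the Galois ring of characteristic `p ^ (k + 1)` and residue degree `n`. Its non-units lie
in the kernel of the reduction onto the residue field, which has `p ^ n ≥ 2 ^ n` elements. -/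
lemma exists_ring_zmod_succ (p : ℕ) [Fact p.Prime] (k n : ℕ) (hn : n ≠ 0) :
    ∃ (R : Type) (_ : CommRing R), Nonempty (R ≃+ (Fin n → ZMod (p ^ (k + 1)))) ∧
      Nat.card {a : R // ¬ IsUnit a} * 2 ^ n ≤ Nat.card R := by
  have hp : p.Prime := Fact.out
  have hpk : 1 < p ^ (k + 1) := one_lt_pow₀ hp.one_lt (by omega)
  have : Fact (1 < p ^ (k + 1)) := ⟨hpk⟩
  have : NeZero (p ^ (k + 1)) := ⟨by omega⟩
  obtain ⟨f, hfm, hfi, hfd⟩ : ∃ f : (ZMod p)[X], f.Monic ∧ Irreducible f ∧ f.natDegree = n := by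
    obtain ⟨α, hα⟩ := Field.exists_primitive_element (ZMod p) (GaloisField p n)
    have hi : IsIntegral (ZMod p) α := IsIntegral.of_finite _ _
    refine ⟨minpoly (ZMod p) α, minpoly.monic hi, minpoly.irreducible hi, ?_⟩
    rw [(Field.primitive_element_iff_minpoly_natDegree_eq (ZMod p) α).1 hα,
      GaloisField.finrank p hn]
  -- the reduction modulo `p`, under which `F` lifts `f`
  let π : ZMod (p ^ (k + 1)) →+* ZMod p := ZMod.castHom (dvd_pow_self p (by omega)) (ZMod p)
  have hπ : Function.Surjective π := ZMod.ringHom_surjective π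
  obtain ⟨F, hFf, hFd, hFm⟩ := lifts_and_natDegree_eq_and_monic
    (show f ∈ lifts π from (mem_lifts f).2 (map_surjective π hπ f)) hfm
  let R := AdjoinRoot F
  have : Fact (Irreducible f) := ⟨hfi⟩
  let bR := AdjoinRoot.powerBasis' hFm
  let bK := AdjoinRoot.powerBasis' hfm
  have hRdim : bR.dim = n := by simp [bR, hFd, hfd]
  have hKdim : bK.dim = n := by simp [bK, hfd]
  let eR : R ≃+ (Fin n → ZMod (p ^ (k + 1))) :=
    (bR.basis.reindex (finCongr hRdim)).equivFun.toAddEquiv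
  let eK : AdjoinRoot f ≃+ (Fin n → ZMod p) :=
    (bK.basis.reindex (finCongr hKdim)).equivFun.toAddEquiv
  have hKcard : Nat.card (AdjoinRoot f) = p ^ n := by
    rw [Nat.card_congr eK.toEquiv]; simp
  have : Finite R := Finite.of_equiv _ eR.toEquiv.symm
  let φ : R →+* AdjoinRoot f := AdjoinRoot.map π F f (by rw [hFf])
  have hφmk : ∀ g, φ (AdjoinRoot.mk F g) = AdjoinRoot.mk f (g.map π) := by
    intro g
    have : (φ.comp (AdjoinRoot.mk F)) = (AdjoinRoot.mk f).comp (mapRingHom π) := by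
      ext x
      · exact (AdjoinRoot.map_of π F f (by rw [hFf]) x).trans (by simp)
      · exact (AdjoinRoot.map_root π F f (by rw [hFf])).trans (by simp)
    simpa using congrArg (fun h => h g) this
  have hφs : Function.Surjective φ := by
    intro y
    obtain ⟨g, rfl⟩ := AdjoinRoot.mk_surjective y
    obtain ⟨G, rfl⟩ := map_surjective π hπ g
    exact ⟨AdjoinRoot.mk F G, hφmk G⟩
  have hnilπ : ∀ c, π c = 0 → IsNilpotent c := by
    intro c hc
    obtain ⟨m, rfl⟩ := ZMod.natCast_zmod_surjective c
    rw [map_natCast, ZMod.natCast_eq_zero_iff] at hc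
    refine ⟨k + 1, ?_⟩
    rw [← Nat.cast_pow, ZMod.natCast_eq_zero_iff]
    exact pow_dvd_pow_of_dvd hc _
  have hnil : ∀ a, φ a = 0 → IsNilpotent a := by
    intro a ha
    obtain ⟨g, rfl⟩ := AdjoinRoot.mk_surjective a
    rw [hφmk, AdjoinRoot.mk_eq_zero] at ha
    obtain ⟨h, hh⟩ := ha
    obtain ⟨H, rfl⟩ := map_surjective π hπ h
    have h0 : (g - F * H).map π = 0 := by
      rw [Polynomial.map_sub, Polynomial.map_mul, hFf, hh, sub_self]
    have h1 : IsNilpotent (g - F * H) := by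
      rw [Polynomial.isNilpotent_iff]
      intro i
      apply hnilπ
      rw [← coeff_map, h0, coeff_zero]
    have h2 := h1.map (AdjoinRoot.mk F)
    rwa [map_sub, map_mul, AdjoinRoot.mk_self, zero_mul, sub_zero] at h2
  have hunit : ∀ a, φ a ≠ 0 → IsUnit a := by
    intro a ha
    obtain ⟨b, hb⟩ := hφs (φ a)⁻¹
    -- an inverse modulo the nil kernel of `φ` lifts to an inverse
    have h1 : IsNilpotent (a * b - 1) := by
      apply hnil
      rw [map_sub, map_mul, hb, mul_inv_cancel₀ ha, map_one, sub_self]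
    have h2 := h1.isUnit_add_one
    rw [sub_add_cancel] at h2
    exact isUnit_of_mul_isUnit_left h2
  refine ⟨R, inferInstance, ⟨eR⟩, ?_⟩
  have h1 : Nat.card {a : R // ¬ IsUnit a} ≤ Nat.card φ.toAddMonoidHom.ker := by
    apply Nat.card_mono (Set.toFinite _)
    intro a ha
    by_contra h
    exact ha (hunit a h)
  have h2 : Nat.card φ.toAddMonoidHom.ker * p ^ n = Nat.card R := by
    rw [← AddSubgroup.card_mul_index φ.toAddMonoidHom.ker, AddSubgroup.index_ker,
      AddMonoidHom.range_eq_top.2 (show Function.Surjective φ.toAddMonoidHom from hφs), ← hKcard,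
      Nat.card_congr AddSubgroup.topEquiv.toEquiv]
  rw [← h2]
  exact Nat.mul_le_mul h1 (Nat.pow_le_pow_left hp.two_le n)

/-- Includes `k = 0`, where the zero ring has no non-units. -/
lemma exists_ring_zmod (p : ℕ) (hp : p.Prime) (k n : ℕ) (hn : n ≠ 0) :
    ∃ (R : Type) (_ : CommRing R), Nonempty (R ≃+ (Fin n → ZMod (p ^ k))) ∧
      Nat.card {a : R // ¬ IsUnit a} * 2 ^ n ≤ Nat.card R := by
  have : Fact p.Prime := ⟨hp⟩
  cases k with
  | succ k => exact exists_ring_zmod_succ p k n hn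
  | zero =>
    have : Subsingleton (ZMod (p ^ 0)) := ZMod.subsingleton_iff.2 (pow_zero p)
    refine ⟨Fin n → ZMod (p ^ 0), inferInstance, ⟨AddEquiv.refl _⟩, ?_⟩
    have : IsEmpty {a : Fin n → ZMod (p ^ 0) // ¬ IsUnit a} :=
      ⟨fun a => a.2 (isUnit_of_subsingleton _)⟩
    rw [Nat.card_of_isEmpty, zero_mul]
    exact Nat.zero_le _

/-- Prescribing the `i`-th coordinate to lie in a set cuts down a product proportionally. -/
lemma card_pi_coord {ι : Type} [Fintype ι] (R : ι → Type) [∀ i, Finite (R i)] (i : ι)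
    (P : R i → Prop) (m : ℕ) (h : Nat.card {a : R i // P a} * m ≤ Nat.card (R i)) :
    Nat.card {x : ∀ j, R j // P (x i)} * m ≤ Nat.card (∀ j, R j) := by
  classical
  let e := Equiv.piSplitAt i R
  let e' : {x : ∀ j, R j // P (x i)} ≃ {a : R i // P a} × (∀ j : {j // j ≠ i}, R j) :=
    (e.subtypeEquiv (q := fun y => P y.1) (fun a => Iff.rfl)).trans
      Equiv.prodSubtypeFstEquivSubtypeProd
  rw [Nat.card_congr e, Nat.card_prod, Nat.card_congr e', Nat.card_prod, mul_right_comm]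
  exact Nat.mul_le_mul_right _ h

/-- Powers of `G` carry ring structures in which the proportion of non-units decays
exponentially. -/
lemma exists_ring (G : Type*) [AddCommGroup G] [Finite G] :
    ∃ c : ℕ, ∀ n : ℕ, n ≠ 0 → ∃ (R : Type) (_ : CommRing R), Nonempty (R ≃+ (Fin n → G)) ∧
      Nat.card {a : R // ¬ IsUnit a} * 2 ^ n ≤ c * Nat.card R := by
  classical
  obtain ⟨ι, _, p, hp, e, ⟨E⟩⟩ := AddCommGroup.equiv_directSum_zmod_of_finite G
  refine ⟨Fintype.card ι, fun n hn => ?_⟩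
  choose R hR eR hcard using fun i => exists_ring_zmod (p i) (hp i) (e i) n hn
  have : ∀ i, NeZero (p i ^ e i) := fun i => ⟨(pow_pos (hp i).pos _).ne'⟩
  have : ∀ i, Finite (R i) := fun i => Finite.of_equiv _ (eR i).some.toEquiv.symm
  let e1 : (∀ i, R i) ≃+ (∀ i, Fin n → ZMod (p i ^ e i)) :=
    AddEquiv.piCongrRight fun i => (eR i).some
  let e2 : (∀ i, Fin n → ZMod (p i ^ e i)) ≃+ (Fin n → ∀ i, ZMod (p i ^ e i)) :=
    { Equiv.piComm _ with map_add' := fun _ _ => rfl }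
  let e3 : (Fin n → ∀ i, ZMod (p i ^ e i)) ≃+ (Fin n → G) :=
    AddEquiv.piCongrRight fun _ => (E.trans (DirectSum.addEquivProd _)).symm
  refine ⟨∀ i, R i, inferInstance, ⟨(e1.trans e2).trans e3⟩, ?_⟩
  have hsub : {a : ∀ i, R i | ¬ IsUnit a} ⊆ ⋃ i, {a : ∀ i, R i | ¬ IsUnit (a i)} := by
    intro a ha
    simpa [Pi.isUnit_iff] using ha
  have h1 : Nat.card {a : ∀ i, R i // ¬ IsUnit a} ≤
      ∑ i, Nat.card {a : ∀ i, R i // ¬ IsUnit (a i)} := by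
    refine (Nat.card_mono (Set.toFinite _) hsub).trans ?_
    exact Set.ncard_iUnion_le_of_fintype fun i => {a : ∀ i, R i | ¬ IsUnit (a i)}
  calc _ ≤ (∑ i, Nat.card {a : ∀ i, R i // ¬ IsUnit (a i)}) * 2 ^ n :=
        Nat.mul_le_mul_right _ h1
    _ = ∑ i, Nat.card {a : ∀ i, R i // ¬ IsUnit (a i)} * 2 ^ n := Finset.sum_mul ..
    _ ≤ ∑ _i : ι, Nat.card (∀ i, R i) :=
        Finset.sum_le_sum fun i _ => card_pi_coord R i _ _ (hcard i)
    _ = _ := by simp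

lemma etaMin_le {G : Type*} [AddCommGroup G] [Finite G] (B : Set G)
    (hB : ∀ x, ∃ a ∈ B, ∃ b ∈ B, a - b = x) : etaMin G 1 ≤ B.ncard :=
  Nat.sInf_le ⟨B, B.toFinite, (isDiffBasis_one_iff B).2 hB, rfl⟩

/-- A difference basis `B` satisfies `|G| ≤ |B| ^ 2`. -/
lemma card_le_etaMin_sq (G : Type*) [AddCommGroup G] [Finite G] :
    Nat.card G ≤ etaMin G 1 ^ 2 := by
  have hne : {k : ℕ | ∃ B : Set G, B.Finite ∧ IsDiffBasis 1 B ∧ Nat.card B = k}.Nonempty :=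
    ⟨_, Set.univ, Set.toFinite _, (isDiffBasis_one_iff _).2 fun x =>
      ⟨x, trivial, 0, trivial, sub_zero x⟩, rfl⟩
  obtain ⟨B, -, hB, hk⟩ := Nat.sInf_mem hne
  rw [isDiffBasis_one_iff] at hB
  change Nat.card B = etaMin G 1 at hk
  rw [← hk, sq, ← Nat.card_prod]
  refine Nat.card_le_card_of_surjective (fun q : B × B => (q.1 : G) - q.2) fun x => ?_
  obtain ⟨a, ha, b, hb, h⟩ := hB x
  exact ⟨(⟨a, ha⟩, ⟨b, hb⟩), h⟩

lemma etaMin_le_of_addEquiv {G H : Type*} [AddCommGroup G] [Finite G] [AddCommGroup H] [Finite H]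
    (e : G ≃+ H) (B : Set G) (hB : ∀ x, ∃ a ∈ B, ∃ b ∈ B, a - b = x) :
    etaMin H 1 ≤ B.ncard := by
  refine (etaMin_le (e '' B) fun x => ?_).trans (Set.ncard_image_le B.toFinite)
  obtain ⟨a, ha, b, hb, h⟩ := hB (e.symm x)
  exact ⟨e a, ⟨a, ha, rfl⟩, e b, ⟨b, hb, rfl⟩, by rw [← map_sub, h, e.apply_symm_apply]⟩

/-- The parabola `{(x, x ^ 2)}` in `R × R` represents every `(a, b)` with `a` a unit, the set
`N × S ∪ {0} × T` represents those with `a` in the set `N` of non-units, provided `S - T = R`. -/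
lemma exists_basis_prod_s16 {R : Type*} [CommRing R] [Finite R] (hodd : Odd (Nat.card R))
    (S T : Set R) (hST : ∀ r, ∃ s ∈ S, ∃ t ∈ T, s - t = r) :
    ∃ B : Set (R × R), (∀ x, ∃ a ∈ B, ∃ b ∈ B, a - b = x) ∧
      B.ncard ≤ Nat.card R + Nat.card {a : R // ¬ IsUnit a} * S.ncard + T.ncard := by
  refine ⟨Set.range (fun x : R => (x, x ^ 2)) ∪ {a : R | ¬ IsUnit a} ×ˢ S ∪ {0} ×ˢ T, ?_, ?_⟩
  · rintro ⟨a, b⟩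
    by_cases ha : IsUnit a
    · have h2 : IsUnit (2 : R) := by
        obtain ⟨k, hk⟩ := hodd
        have h0 : ((Nat.card R : ℕ) : R) = 0 := by
          rw [← nsmul_one]; exact card_nsmul_eq_zero'
        rw [hk] at h0
        push_cast at h0
        exact IsUnit.of_mul_eq_one (-(k : R)) (by linear_combination -h0)
      obtain ⟨v, hv⟩ := (h2.mul ha).exists_right_inv
      -- solves `x ^ 2 - (x - a) ^ 2 = b` for `x`
      refine ⟨_, Or.inl (Or.inl ⟨v * (b + a ^ 2), rfl⟩), _,
        Or.inl (Or.inl ⟨v * (b + a ^ 2) - a, rfl⟩), ?_⟩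
      ext
      · simp
      · simp only [Prod.snd_sub]
        linear_combination (b + a ^ 2) * hv
    · obtain ⟨s, hs, t, ht, h⟩ := hST b
      exact ⟨(a, s), Or.inl (Or.inr ⟨ha, hs⟩), (0, t), Or.inr ⟨rfl, ht⟩, by simp [h]⟩
  · refine (Set.ncard_union_le _ _).trans (Nat.add_le_add ((Set.ncard_union_le _ _).trans
      (Nat.add_le_add ?_ ?_)) ?_)
    · rw [← Set.image_univ, ← Set.ncard_univ]
      exact Set.ncard_image_le Set.finite_univ
    · rw [Set.ncard_prod]; rfl
    · rw [Set.ncard_prod]; simp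

/-- For every splitting `n = j + m`, the first `j` coordinates and the last `m` coordinates give
sets `S`, `T` with `S - T = G ^ n`. -/
lemma exists_split {G R : Type*} [AddCommGroup G] [Finite G] [AddCommGroup R] (j m : ℕ)
    (e : R ≃+ (Fin (j + m) → G)) :
    ∃ S T : Set R, (∀ r, ∃ s ∈ S, ∃ t ∈ T, s - t = r) ∧
      S.ncard ≤ Nat.card G ^ j ∧ T.ncard ≤ Nat.card G ^ m := by
  refine ⟨Set.range fun f : Fin j → G => e.symm (Fin.append f 0),
    Set.range fun f : Fin m → G => e.symm (Fin.append 0 f), fun r => ?_, ?_, ?_⟩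
  · refine ⟨_, ⟨fun i => e r (Fin.castAdd m i), rfl⟩, _, ⟨fun i => - e r (Fin.natAdd j i), rfl⟩, ?_⟩
    rw [← map_sub, AddEquiv.symm_apply_eq]
    ext i
    refine Fin.addCases (fun i => ?_) (fun i => ?_) i <;> simp
  · rw [← Set.image_univ]
    refine (Set.ncard_image_le Set.finite_univ).trans ?_
    simp [Set.ncard_univ, Nat.card_fun]
  · rw [← Set.image_univ]
    refine (Set.ncard_image_le Set.finite_univ).trans ?_
    simp [Set.ncard_univ, Nat.card_fun]

/-- The upper bound: with `n = j + m`, `R` a ring on `G ^ n` and `N` its set of non-units, the three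
terms are the relative sizes of the parabola, of `N × S` and of `{0} × T`. -/
lemma etaMin_upper (G : Type*) [AddCommGroup G] [Finite G] (hodd : Odd (Nat.card G)) :
    ∃ c : ℕ, ∀ j m : ℕ, j + m ≠ 0 → (etaMin (Fin (2 * (j + m)) → G) 1 : ℝ) /
      (Nat.card G : ℝ) ^ (j + m) ≤
        1 + c * (Nat.card G : ℝ) ^ j * (1 / 2) ^ (j + m) + (1 / (Nat.card G : ℝ)) ^ j := by
  obtain ⟨c, hc⟩ := exists_ring G
  refine ⟨c, fun j m hn => ?_⟩
  obtain ⟨R, _, ⟨e⟩, hR⟩ := hc (j + m) hn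
  have : Finite R := Finite.of_equiv _ e.toEquiv.symm
  have hcard : Nat.card R = Nat.card G ^ (j + m) := by
    rw [Nat.card_congr e.toEquiv]; simp [Nat.card_fun]
  obtain ⟨S, T, hST, hS, hT⟩ := exists_split j m e
  obtain ⟨B, hB, hBc⟩ := exists_basis_prod_s16 (hcard ▸ hodd.pow) S T hST
  let E : (R × R) ≃+ (Fin (2 * (j + m)) → G) :=
    ((e.prodCongr e).trans
      (LinearEquiv.sumArrowLequivProdArrow (Fin (j + m)) (Fin (j + m)) ℤ G).symm.toAddEquiv).trans
      (LinearEquiv.funCongrLeft ℤ G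
        ((finCongr (two_mul (j + m))).trans finSumFinEquiv.symm)).toAddEquiv
  have h1 := (etaMin_le_of_addEquiv E B hB).trans hBc
  set q := Nat.card G with hq
  have hq0 : (0 : ℝ) < q := by exact_mod_cast Nat.card_pos
  set N := Nat.card {a : R // ¬ IsUnit a}
  have h2 : (etaMin (Fin (2 * (j + m)) → G) 1 : ℝ) ≤ q ^ (j + m) + N * q ^ j + q ^ m := by
    rw [hcard] at h1
    exact_mod_cast h1.trans (by gcongr)
  have h3 : (N : ℝ) ≤ c * q ^ (j + m) * (1 / 2) ^ (j + m) := by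
    rw [one_div, inv_pow, ← div_eq_mul_inv, le_div_iff₀ (by positivity)]
    rw [hcard] at hR
    exact_mod_cast hR
  rw [div_le_iff₀ (by positivity)]
  have h4 : (1 / (q : ℝ)) ^ j * q ^ (j + m) = q ^ m := by
    rw [pow_add, one_div, inv_pow]; field_simp
  have h5 : (N : ℝ) * q ^ j ≤ c * q ^ (j + m) * (1 / 2) ^ (j + m) * q ^ j := by gcongr
  nlinarith

/-- For a finite abelian group `G` of odd order with `|G| > 1`,
`η₁(G^{2n}) = (1 + o(1))|G|^n` as `n → ∞`. -/
theorem stmt16 (G : Type*) [AddCommGroup G] [Fintype G]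
    (hodd : Odd (Fintype.card G)) (hG : 1 < Fintype.card G) :
    Filter.Tendsto (fun n : ℕ => (etaMin (Fin (2 * n) → G) 1 : ℝ) /
        (Fintype.card G : ℝ) ^ n) Filter.atTop (nhds 1) := by
  rw [← Nat.card_eq_fintype_card] at *
  obtain ⟨c, hc⟩ := etaMin_upper G hodd
  have hlow : ∀ n : ℕ, 1 ≤ (etaMin (Fin (2 * n) → G) 1 : ℝ) / (Nat.card G : ℝ) ^ n := by
    intro n
    have h := card_le_etaMin_sq (Fin (2 * n) → G)
    rw [Nat.card_fun, Nat.card_fin, mul_comm 2 n, pow_mul, mul_comm n 2] at h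
    have h' := (Nat.pow_le_pow_iff_left two_ne_zero).1 h
    rw [one_le_div (by positivity)]
    exact_mod_cast h'
  set q := Nat.card G
  have hq1 : (1 : ℝ) < q := by exact_mod_cast hG
  have hq0 : (0 : ℝ) < q := by linarith
  rw [Metric.tendsto_atTop]
  intro ε hε
  -- first fix `j` making the last error term small, then let `n` grow
  obtain ⟨j, hj⟩ := exists_pow_lt_of_lt_one (half_pos hε) ((div_lt_one hq0).2 hq1)
  have hlim : Tendsto (fun n : ℕ => c * (q : ℝ) ^ j * (1 / 2) ^ n) atTop (𝓝 0) := by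
    simpa using (tendsto_pow_atTop_nhds_zero_of_lt_one (r := (1 / 2 : ℝ)) (by norm_num)
      (by norm_num)).const_mul (c * (q : ℝ) ^ j)
  obtain ⟨n₀, hn₀⟩ := eventually_atTop.1 (hlim.eventually (gt_mem_nhds (half_pos hε)))
  refine ⟨max n₀ (j + 1), fun n hn => ?_⟩
  have hn1 : n₀ ≤ n := le_trans (le_max_left _ _) hn
  have hn2 : j + 1 ≤ n := le_trans (le_max_right _ _) hn
  obtain ⟨m, rfl⟩ := Nat.exists_eq_add_of_le (show j ≤ n by omega)
  have h1 := hc j m (by omega)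
  have h2 := hn₀ _ hn1
  have h3 := hlow (j + m)
  rw [Real.dist_eq, abs_of_nonneg (by linarith)]
  linarith
end

section
/- Let n ≥ 1 be an integer. Then η₁(Z_4^n) ≤ 2^n + 3·2^{n/2}, where Z_4^n denotes the direct product of n copies of the cyclic group of order 4. In particular, lim_{n → ∞} η₁(Z_4^n) / 2^n = 1. -/
/-!
Let `F` be the field with `2 ^ n` elements and put on `F × F` the addition
`(a, b) + (c, d) = (a + c, b + d + a c)` (length-two Witt vectors, up to a Frobenius twist).
Since `2 (a, b) = (0, a ^ 2)` and squaring is bijective on `F`, this group is isomorphic to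
`Z_4 ^ n`: the elements `(e_i, 0)`, for a basis `e` of `F` over `Z_2`, generate it, and the
cardinalities agree. The `2 ^ n` elements `(a, 0)` form a relative difference set: for `x ≠ 0`,
`(x, y) = (c + x, 0) - (c, 0)` with `c = - y / x`. The remaining elements `(0, y)` are differences
of elements `(0, h)` with `h` in the union of two complementary `Z_2`-subspaces of `F`, of
dimensions `⌊n/2⌋` and `⌈n/2⌉`; such a union has at most `3 * 2 ^ ⌊n/2⌋` elements.

For the limit, a 1-difference basis `B` satisfies `4 ^ n ≤ |B| ^ 2`, so `2 ^ n ≤ η₁(Z_4 ^ n)`.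
-/

open Filter Topology

/-- The set `R × R`, to be equipped with the addition `(a, b) + (c, d) = (a + c, b + d + a c)`. -/
@[ext] structure TwistedProd (R : Type*) where
  fst : R
  snd : R

namespace TwistedProd

variable {R : Type*} [CommRing R]

instance : Add (TwistedProd R) := ⟨fun x y => ⟨x.1 + y.1, x.2 + y.2 + x.1 * y.1⟩⟩
instance : Zero (TwistedProd R) := ⟨⟨0, 0⟩⟩
instance : Neg (TwistedProd R) := ⟨fun x => ⟨-x.1, -x.2 + x.1 ^ 2⟩⟩

@[simp] lemma add_fst (x y : TwistedProd R) : (x + y).1 = x.1 + y.1 := rfl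
@[simp] lemma add_snd (x y : TwistedProd R) : (x + y).2 = x.2 + y.2 + x.1 * y.1 := rfl
@[simp] lemma zero_fst : (0 : TwistedProd R).1 = 0 := rfl
@[simp] lemma zero_snd : (0 : TwistedProd R).2 = 0 := rfl
@[simp] lemma neg_fst (x : TwistedProd R) : (-x).1 = -x.1 := rfl
@[simp] lemma neg_snd (x : TwistedProd R) : (-x).2 = -x.2 + x.1 ^ 2 := rfl

instance : AddCommGroup (TwistedProd R) where
  add_assoc x y z := by ext <;> simp <;> ring
  zero_add x := by ext <;> simp
  add_zero x := by ext <;> simp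
  add_comm x y := by ext <;> simp <;> ring
  neg_add_cancel x := by ext <;> simp; ring
  nsmul := nsmulRec
  zsmul := zsmulRec

/-- The forgetful bijection with `R × R`; it is not additive. -/
def equivProd : TwistedProd R ≃ R × R where
  toFun x := (x.1, x.2)
  invFun p := ⟨p.1, p.2⟩
  left_inv _ := rfl
  right_inv _ := rfl

lemma four_nsmul [CharP R 2] (x : TwistedProd R) : 4 • x = 0 := by
  have h2 : (2 : R) = 0 := CharTwo.two_eq_zero
  have : 4 • x = (x + x) + (x + x) := by abel
  rw [this]
  ext
  · simp only [add_fst, zero_fst]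
    linear_combination (2 * x.1) * h2
  · simp only [add_fst, add_snd, zero_snd]
    linear_combination (2 * x.2 + 3 * x.1 ^ 2) * h2

/-- Over a field with `2 ^ n` elements the twisted product is a copy of `Z_4 ^ n`. -/
lemma exists_addEquiv (F : Type*) [Field F] [Finite F] [Algebra (ZMod 2) F] (n : ℕ)
    (hn : Module.finrank (ZMod 2) F = n) : Nonempty ((Fin n → ZMod 4) ≃+ TwistedProd F) := by
  classical
  have : CharP F 2 := charP_of_injective_algebraMap (algebraMap (ZMod 2) F).injective 2
  let _ : Module (ZMod 4) (TwistedProd F) := AddCommGroup.zmodModule four_nsmul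
  let e : Module.Basis (Fin n) (ZMod 2) F := Module.finBasisOfFinrankEq _ _ hn
  let v : Fin n → TwistedProd F := fun i => ⟨e i, 0⟩
  let Ψ : (Fin n → ZMod 4) →ₗ[ZMod 4] TwistedProd F := Fintype.linearCombination (ZMod 4) v
  have hfst : ∀ a : F, ∃ b : F, (⟨a, b⟩ : TwistedProd F) ∈ LinearMap.range Ψ := by
    intro a
    have ha : a ∈ Submodule.span (ZMod 2) (Set.range e) := by simp [e.span_eq]
    induction ha using Submodule.span_induction with
    | mem x hx =>
      obtain ⟨i, rfl⟩ := hx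
      refine ⟨0, ?_⟩
      rw [Fintype.range_linearCombination]
      exact Submodule.subset_span ⟨i, rfl⟩
    | zero => exact ⟨0, zero_mem _⟩
    | add x y _ _ hx hy =>
      obtain ⟨b, hb⟩ := hx
      obtain ⟨c, hc⟩ := hy
      exact ⟨_, add_mem hb hc⟩
    | smul r x _ hx =>
      obtain rfl | rfl : r = 0 ∨ r = 1 := by
        revert r
        decide
      · exact ⟨0, by rw [zero_smul]; exact zero_mem _⟩
      · simpa only [one_smul] using hx
  -- Doubling `(a, b)` gives `(0, a ^ 2)`, and every element of `F` is a square.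
  have hsnd : ∀ c : F, (⟨0, c⟩ : TwistedProd F) ∈ LinearMap.range Ψ := by
    intro c
    obtain ⟨a, rfl⟩ : IsSquare c := FiniteField.isSquare_of_char_two (by
      exact ringChar.eq_iff.mpr inferInstance) c
    obtain ⟨b, hb⟩ := hfst a
    convert add_mem hb hb using 1
    ext <;> simp [CharTwo.add_self_eq_zero]
  have hsurj : Function.Surjective Ψ := by
    rintro ⟨a, c⟩
    obtain ⟨b, hb⟩ := hfst a
    have := add_mem hb (hsnd (c - b))
    convert this using 1
    change _ ↔ (⟨a, b⟩ + ⟨0, c - b⟩ : TwistedProd F) ∈ LinearMap.range Ψ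
    have h : (⟨a, b⟩ + ⟨0, c - b⟩ : TwistedProd F) = ⟨a, c⟩ := by ext <;> simp
    rw [h]
    rfl
  have hcard : Nat.card (Fin n → ZMod 4) = Nat.card (TwistedProd F) := by
    rw [Nat.card_congr equivProd, Nat.card_prod,
      Module.natCard_eq_pow_finrank (K := ZMod 2) (V := F), hn, Nat.card_fun]
    simp [← mul_pow]
  exact ⟨(LinearEquiv.ofBijective Ψ
    ((Nat.bijective_iff_surjective_and_card Ψ).2 ⟨hsurj, hcard⟩)).toAddEquiv⟩

end TwistedProd

lemma etaMin_one_le {A G : Type*} [AddCommGroup A] [Finite A] [AddCommGroup G] (e : A ≃+ G)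
    (B : Set G) (hB : ∀ x : G, ∃ b ∈ B, ∃ c ∈ B, b - c = x) : etaMin A 1 ≤ B.ncard := by
  refine Nat.sInf_le ⟨e ⁻¹' B, Set.toFinite _, ?_, ?_⟩
  · intro x
    obtain ⟨b, hb, c, hc, h⟩ := hB (e x)
    have : Nonempty {p : A × A // p.1 ∈ e ⁻¹' B ∧ p.2 ∈ e ⁻¹' B ∧ p.1 - p.2 = x} :=
      ⟨⟨(e.symm b, e.symm c), by simpa using hb, by simpa using hc, by
        rw [← map_sub, h, e.symm_apply_apply]⟩⟩
    exact Nat.card_pos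
  · rw [← Nat.card_coe_set_eq]
    exact Nat.card_congr (e.toEquiv.subtypeEquiv fun a => Iff.rfl)

/-- The union of two complementary subspaces is a 1-difference basis of a `Z_2`-space. -/
lemma exists_small_basis (F : Type*) [AddCommGroup F] [Finite F] [Module (ZMod 2) F] (n : ℕ)
    (hn : Module.finrank (ZMod 2) F = n) :
    ∃ H : Set F, (∀ x : F, ∃ b ∈ H, ∃ c ∈ H, b - c = x) ∧ H.ncard ≤ 3 * 2 ^ (n / 2) := by
  let f : F ≃ₗ[ZMod 2] (Fin (n / 2) → ZMod 2) × (Fin (n - n / 2) → ZMod 2) :=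
    LinearEquiv.ofFinrankEq _ _ (by simp [hn]; omega)
  refine ⟨Set.range (fun x => f.symm (x, 0)) ∪ Set.range (fun y => f.symm (0, y)), ?_, ?_⟩
  · intro x
    refine ⟨_, Or.inl ⟨(f x).1, rfl⟩, _, Or.inr ⟨-(f x).2, rfl⟩, ?_⟩
    change f.symm _ - f.symm _ = x
    rw [← map_sub]
    simp
  · refine (Set.ncard_union_le _ _).trans ?_
    have h1 : (Set.range (fun x => f.symm (x, 0))).ncard ≤ 2 ^ (n / 2) := by
      rw [← Set.image_univ]
      refine (Set.ncard_image_le).trans ?_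
      simp [Set.ncard_univ]
    have h2 : (Set.range (fun x => f.symm (0, x))).ncard ≤ 2 ^ (n - n / 2) := by
      rw [← Set.image_univ]
      refine (Set.ncard_image_le).trans ?_
      simp [Set.ncard_univ]
    have h3 : 2 ^ (n - n / 2) ≤ 2 ^ (n / 2 + 1) := Nat.pow_le_pow_right (by norm_num) (by omega)
    rw [pow_succ] at h3
    omega

lemma etaMin_le_s17 (n : ℕ) (hn : 1 ≤ n) :
    etaMin (Fin n → ZMod 4) 1 ≤ 2 ^ n + 3 * 2 ^ (n / 2) := by
  let F := GaloisField 2 n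
  have hF : Module.finrank (ZMod 2) F = n := GaloisField.finrank 2 (by omega)
  have : Finite F := Module.finite_of_finite (ZMod 2)
  obtain ⟨e⟩ := TwistedProd.exists_addEquiv F n hF
  obtain ⟨H, hH, hHc⟩ := exists_small_basis F n hF
  refine (etaMin_one_le e (Set.range (fun a : F => (⟨a, 0⟩ : TwistedProd F)) ∪
    (fun b : F => (⟨0, b⟩ : TwistedProd F)) '' H) ?_).trans ?_
  · rintro ⟨x, y⟩
    by_cases hx : x = 0
    · subst hx
      obtain ⟨b, hb, c, hc, rfl⟩ := hH y
      refine ⟨_, Or.inr ⟨b, hb, rfl⟩, _, Or.inr ⟨c, hc, rfl⟩, ?_⟩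
      rw [sub_eq_iff_eq_add]
      ext <;> simp
    · refine ⟨_, Or.inl ⟨x + -y / x, rfl⟩, _, Or.inl ⟨-y / x, rfl⟩, ?_⟩
      rw [sub_eq_iff_eq_add]
      ext
      · simp
      · simp only [TwistedProd.add_snd]
        rw [mul_div_cancel₀ _ hx]
        ring
  · refine (Set.ncard_union_le _ _).trans (add_le_add ?_ ((Set.ncard_image_le).trans hHc))
    rw [← Set.image_univ]
    refine (Set.ncard_image_le).trans ?_
    rw [Set.ncard_univ, Module.natCard_eq_pow_finrank (K := ZMod 2) (V := F), hF]
    simp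

lemma le_etaMin (n : ℕ) : 2 ^ n ≤ etaMin (Fin n → ZMod 4) 1 := by
  have hne : {k : ℕ | ∃ B : Set (Fin n → ZMod 4), B.Finite ∧ IsDiffBasis 1 B ∧
      Nat.card B = k}.Nonempty := by
    refine ⟨_, Set.univ, Set.toFinite _, fun x => ?_, rfl⟩
    have : Nonempty {p : (Fin n → ZMod 4) × (Fin n → ZMod 4) //
        p.1 ∈ Set.univ ∧ p.2 ∈ Set.univ ∧ p.1 - p.2 = x} := ⟨⟨(x, 0), by simp⟩⟩
    exact Nat.card_pos
  obtain ⟨B, -, hB, hk⟩ := Nat.sInf_mem hne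
  change _ = etaMin (Fin n → ZMod 4) 1 at hk
  rw [← hk]
  have hs : Function.Surjective (fun p : B × B => (p.1 : Fin n → ZMod 4) - p.2) := by
    intro x
    obtain ⟨⟨⟨b, c⟩, hb, hc, h⟩⟩ := (Nat.card_pos_iff.1 (hB x)).1
    exact ⟨(⟨b, hb⟩, ⟨c, hc⟩), h⟩
  have h := Nat.card_le_card_of_surjective _ hs
  rw [Nat.card_prod, Nat.card_fun] at h
  simp only [Nat.card_zmod, Nat.card_fin] at h
  have h4 : (4 : ℕ) ^ n = 2 ^ n * 2 ^ n := by rw [← mul_pow]; norm_num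
  rw [h4] at h
  exact Nat.mul_self_le_mul_self_iff.1 h

/-- For `n ≥ 1`, `η₁(Z_4^n) ≤ 2^n + 3 · 2^{n/2}`; in particular
`η₁(Z_4^n) = (1 + o(1)) 2^n` as `n → ∞`. -/
theorem stmt17 :
    (∀ n : ℕ, 1 ≤ n →
      (etaMin (Fin n → ZMod 4) 1 : ℝ) ≤ (2 : ℝ) ^ n + 3 * (2 : ℝ) ^ ((n : ℝ) / 2)) ∧
    Filter.Tendsto (fun n : ℕ => (etaMin (Fin n → ZMod 4) 1 : ℝ) / (2 : ℝ) ^ n)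
      Filter.atTop (nhds 1) := by
  have hub : ∀ n : ℕ, 1 ≤ n →
      (etaMin (Fin n → ZMod 4) 1 : ℝ) ≤ (2 : ℝ) ^ n + 3 * (2 : ℝ) ^ ((n : ℝ) / 2) := by
    intro n hn
    have h : (etaMin (Fin n → ZMod 4) 1 : ℝ) ≤ (2 : ℝ) ^ n + 3 * (2 : ℝ) ^ (n / 2) := by
      exact_mod_cast etaMin_le_s17 n hn
    have h2 : (2 : ℝ) ^ (n / 2) ≤ (2 : ℝ) ^ ((n : ℝ) / 2) := by
      rw [← Real.rpow_natCast]
      exact Real.rpow_le_rpow_of_exponent_le (by norm_num) Nat.cast_div_le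
    linarith
  refine ⟨hub, ?_⟩
  have hsq : ∀ n : ℕ, (2 : ℝ) ^ ((n : ℝ) / 2) = (√2) ^ n := by
    intro n
    rw [Real.sqrt_eq_rpow, ← Real.rpow_natCast, ← Real.rpow_mul (by norm_num)]
    ring_nf
  have hlim : Tendsto (fun n : ℕ => 1 + 3 * (√2 / 2) ^ n) atTop (𝓝 1) := by
    have hlt : √2 / 2 < 1 := by
      have := Real.sqrt_lt_sqrt (by norm_num : (0 : ℝ) ≤ 2) (by norm_num : (2 : ℝ) < 2 ^ 2)
      rw [Real.sqrt_sq (by norm_num)] at this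
      linarith
    have := tendsto_pow_atTop_nhds_zero_of_lt_one (by positivity) hlt
    simpa using (this.const_mul 3).const_add 1
  refine tendsto_of_tendsto_of_tendsto_of_le_of_le' tendsto_const_nhds hlim ?_ ?_
  · refine Eventually.of_forall fun n => ?_
    rw [le_div_iff₀ (by positivity), one_mul]
    exact_mod_cast le_etaMin n
  · filter_upwards [eventually_ge_atTop 1] with n hn
    rw [div_le_iff₀ (by positivity)]
    refine (hub n hn).trans_eq ?_
    rw [hsq, div_pow]
    field_simp
end

section
/- Let p be a prime, let s, n ≥ 1 be integers, and let k be an integer with 2 ≤ k ≤ min{p^n, p^{sn}/2}. Then ν_{k² − k}(Z_{p^s}^{2n}) ≤ k·(p^{sn} − 1) and η_{k² − k}(Z_{p^s}^{2n}) ≤ k·(p^{sn} − 1), where Z_{p^s}^{2n} denotes the direct product of 2n copies of the cyclic group of order p^s. -/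
/-!
Write `q = p ^ (s * n)` and `V = (ZMod (p ^ s)) ^ n`, so that the group is `G = V × V` with `|V| = q`.
The basis is a union of `k` subgroups of order `q`, with `0` removed, any two of which are
complementary in `G` (a partial spread). The subgroups are the graphs `{(x, M_i x)}` of `n × n`
matrices `M_i` over `ZMod (p ^ s)` with `M_i - M_j` invertible for `i ≠ j`. To get such matrices,
take the multiplication matrices over `ZMod p` of `k` distinct elements of the field with `p ^ n`
elements and lift their entries arbitrarily to `ZMod (p ^ s)`: the determinant of a difference is
nonzero modulo `p`, hence a unit (`exists_matrices`).

The number of representations of `x` as a sum is then bounded below as follows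
(`card_representations`).
* If `x` lies in none of the subgroups, each of the `k² - k` ordered pairs of distinct subgroups
  gives one representation, and its two terms are nonzero.
* If `x ≠ 0` lies in the subgroup `H`, the pairs of distinct subgroups other than `H` give
  `(k - 1)(k - 2)` representations, and there are `q - 2 ≥ 2k - 2` more inside `H`.
* If `x = 0`, the pairs `(a, -a)` give `k (q - 1)` representations.

The set is symmetric under negation, so it is a difference basis as well.
-/

/-- `A` is a `g`-additive basis for the additive group `G`: every `x ∈ G` has at least `g`
representations `x = a₁ + a₂` with ordered pairs `(a₁, a₂) ∈ A × A`. -/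
def IsAddBasis {G : Type*} [AddCommGroup G] (g : ℕ) (A : Set G) : Prop :=
  ∀ x : G, g ≤ Nat.card {p : G × G // p.1 ∈ A ∧ p.2 ∈ A ∧ p.1 + p.2 = x}

/-- `ν_g(G)`: the minimum size of a `g`-additive basis for `G`. -/
noncomputable def nuMin (G : Type*) [AddCommGroup G] (g : ℕ) : ℕ :=
  sInf {k : ℕ | ∃ A : Set G, A.Finite ∧ IsAddBasis g A ∧ Nat.card A = k}

/-- Matrices over `ZMod (p ^ s)`, at most `p ^ n` of them, with pairwise differences invertible:
entrywise lifts of multiplication matrices of distinct elements of the field with `p ^ n`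
elements. -/
lemma exists_matrices (p : ℕ) (hp : p.Prime) (s n : ℕ) (hs : 1 ≤ s) (hn : 1 ≤ n)
    (k : ℕ) (hkn : k ≤ p ^ n) :
    ∃ M : Fin k → Matrix (Fin n) (Fin n) (ZMod (p ^ s)),
      ∀ i j, i ≠ j → IsUnit (M i - M j) := by
  have : Fact p.Prime := ⟨hp⟩
  have hn0 : n ≠ 0 := by omega
  have hdvd : p ∣ p ^ s := dvd_pow_self p (by omega)
  set c : ZMod (p ^ s) →+* ZMod p := ZMod.castHom hdvd (ZMod p) with hc
  have hcs : Function.Surjective c := ZMod.castHom_surjective hdvd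
  have hunit : ∀ d : ZMod (p ^ s), c d ≠ 0 → IsUnit d := by
    intro d hd
    have : NeZero (p ^ s) := ⟨pow_ne_zero _ hp.ne_zero⟩
    rw [← ZMod.natCast_zmod_val d] at hd ⊢
    rw [ZMod.isUnit_iff_coprime]
    rw [map_natCast, Ne, ZMod.natCast_eq_zero_iff] at hd
    exact (((Nat.Prime.coprime_iff_not_dvd hp).2 hd).symm).pow_right s
  let _ : Fintype (GaloisField p n) := Fintype.ofFinite _
  have hcard : Fintype.card (Fin k) ≤ Fintype.card (GaloisField p n) := by
    rw [Fintype.card_fin, ← Nat.card_eq_fintype_card, GaloisField.card p n hn0]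
    exact hkn
  obtain ⟨f⟩ := Function.Embedding.nonempty_of_card_le hcard
  let b : Module.Basis (Fin n) (ZMod p) (GaloisField p n) :=
    Module.finBasisOfFinrankEq (ZMod p) (GaloisField p n) (GaloisField.finrank p hn0)
  refine ⟨fun i => (Algebra.leftMulMatrix b (f i)).map (Function.surjInv hcs), ?_⟩
  intro i j hij
  rw [Matrix.isUnit_iff_isUnit_det]
  apply hunit
  have h1 : ∀ i, c.mapMatrix ((Algebra.leftMulMatrix b (f i)).map (Function.surjInv hcs))
      = Algebra.leftMulMatrix b (f i) := by
    intro i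
    ext u v
    simp [Function.surjInv_eq hcs]
  rw [RingHom.map_det, map_sub, h1, h1, ← map_sub]
  have hne : f i - f j ≠ 0 := sub_ne_zero.2 (fun h => hij (f.injective h))
  have h2 : IsUnit (Algebra.leftMulMatrix b (f i - f j)) :=
    (isUnit_iff_ne_zero.2 hne).map _
  exact ((Matrix.isUnit_iff_isUnit_det _).1 h2).ne_zero

/-- Homomorphisms `φ i : V → G` form a partial spread if for `i ≠ j` every element of `G` is
uniquely of the form `φ i v + φ j w`. When there are at least two of them, this makes each `φ i`
injective, and their images are pairwise complementary subgroups. -/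
def IsPartialSpread {ι V G : Type*} [AddCommGroup V] [AddCommGroup G] (φ : ι → V →+ G) : Prop :=
  ∀ i j, i ≠ j → Function.Bijective (fun w : V × V => φ i w.1 + φ j w.2)

/-- The union of the images of the `φ i`, without `0` when the `φ i` are injective. -/
def spreadSet {ι V G : Type*} [AddCommGroup V] [AddCommGroup G] (φ : ι → V →+ G) : Set G :=
  {g | ∃ i v, v ≠ 0 ∧ φ i v = g}

section Spread

variable {V G : Type*} [AddCommGroup V] [AddCommGroup G] {k : ℕ} {φ : Fin k → V →+ G}

lemma IsPartialSpread.inj (hφ : IsPartialSpread φ) (hk : 2 ≤ k) (i : Fin k) :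
    Function.Injective (φ i) := by
  have : Nontrivial (Fin k) := Fin.nontrivial_iff_two_le.2 hk
  obtain ⟨j, hj⟩ := exists_ne i
  intro v w h
  have := @(hφ i j hj.symm).1 (v, 0) (w, 0) (by simpa using h)
  exact congrArg Prod.fst this

/-- A nonzero point of the union lies in the image of a single `φ i`. -/
lemma IsPartialSpread.index_eq (hφ : IsPartialSpread φ) {i j : Fin k} {v w : V} (hv : v ≠ 0)
    (h : φ i v = φ j w) : i = j := by
  by_contra hij
  have := @(hφ i j hij).1 (v, -w) (0, 0) (by simp [h])
  exact hv (congrArg Prod.fst this)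

/-- If `x` avoids the images of the `φ i` with `i ∈ S`, then every ordered pair of distinct elements
of `S` gives a representation of `x` by points of the union. The first terms are recorded as lying
in the images indexed by `S`, to tell these representations from others. -/
lemma IsPartialSpread.exists_offDiag (hφ : IsPartialSpread φ) (S : Finset (Fin k)) (x : G)
    (hx : ∀ i ∈ S, ∀ v, φ i v ≠ x) :
    ∃ T : Finset (G × G), T.card = S.card * S.card - S.card ∧
      ∀ t ∈ T, (t.1 ∈ spreadSet φ ∧ t.2 ∈ spreadSet φ ∧ t.1 + t.2 = x) ∧
        ∃ i ∈ S, ∃ v, v ≠ 0 ∧ φ i v = t.1 := by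
  classical
  have hex : ∀ r : Fin k × Fin k, ∃ w : V × V, r ∈ S.offDiag →
      w.1 ≠ 0 ∧ w.2 ≠ 0 ∧ φ r.1 w.1 + φ r.2 w.2 = x := by
    intro r
    by_cases hr : r ∈ S.offDiag
    · obtain ⟨h1, h2, h3⟩ := Finset.mem_offDiag.1 hr
      obtain ⟨w, hw⟩ := (hφ r.1 r.2 h3).2 x
      refine ⟨w, fun _ => ⟨?_, ?_, hw⟩⟩
      · intro h
        exact hx _ h2 w.2 (by simpa [h] using hw)
      · intro h
        exact hx _ h1 w.1 (by simpa [h] using hw)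
    · exact ⟨0, fun h => absurd h hr⟩
  choose w hw using hex
  refine ⟨S.offDiag.image (fun r => (φ r.1 (w r).1, φ r.2 (w r).2)), ?_, ?_⟩
  · rw [Finset.card_image_of_injOn, Finset.offDiag_card]
    intro r hr r' hr' h
    have h' := Prod.mk.inj h
    exact Prod.ext (hφ.index_eq (hw r hr).1 h'.1) (hφ.index_eq (hw r hr).2.1 h'.2)
  · intro t ht
    obtain ⟨r, hr, rfl⟩ := Finset.mem_image.1 ht
    obtain ⟨h1, h2, h3⟩ := hw r hr
    exact ⟨⟨⟨_, _, h1, rfl⟩, ⟨_, _, h2, rfl⟩, h3⟩,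
      r.1, (Finset.mem_offDiag.1 hr).1, _, h1, rfl⟩

lemma IsPartialSpread.card_representations [Fintype V] (hφ : IsPartialSpread φ) (hk : 2 ≤ k)
    (hV : 2 * k ≤ Fintype.card V) (x : G) :
    ∃ T : Finset (G × G), k ^ 2 - k ≤ T.card ∧
      ∀ t ∈ T, t.1 ∈ spreadSet φ ∧ t.2 ∈ spreadSet φ ∧ t.1 + t.2 = x := by
  classical
  by_cases hx : ∃ i v, φ i v = x
  · obtain ⟨i, v, rfl⟩ := hx
    by_cases hv : v = 0
    · subst hv
      refine ⟨((Finset.univ : Finset (Fin k)) ×ˢ (Finset.univ.erase (0 : V))).image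
        (fun r => (φ r.1 r.2, φ r.1 (-r.2))), ?_, ?_⟩
      · rw [Finset.card_image_of_injOn]
        · rw [Finset.card_product, Finset.card_erase_of_mem (Finset.mem_univ _),
            Finset.card_univ, Finset.card_univ, Fintype.card_fin, sq, ← Nat.mul_sub_one]
          exact Nat.mul_le_mul_left _ (by omega)
        · rintro ⟨i, v⟩ hr ⟨j, w⟩ hr' h
          have h' : φ i v = φ j w := (Prod.mk.inj h).1
          have hv : v ≠ 0 := by simpa using hr
          obtain rfl := hφ.index_eq hv h'
          rw [hφ.inj hk _ h']
      · intro t ht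
        obtain ⟨⟨j, w⟩, hr, rfl⟩ := Finset.mem_image.1 ht
        have hw : w ≠ 0 := by simpa using hr
        exact ⟨⟨_, _, hw, rfl⟩, ⟨_, _, neg_ne_zero.2 hw, rfl⟩, by simp⟩
    · obtain ⟨T, hT, hT'⟩ := hφ.exists_offDiag (Finset.univ.erase i) (φ i v) (by
        intro j hj w h
        exact (Finset.ne_of_mem_erase hj) (hφ.index_eq hv h.symm).symm)
      let T₂ : Finset (G × G) :=
        ((Finset.univ.erase (0 : V)).erase v).image (fun w => (φ i w, φ i (v - w)))
      have hT₂ : T₂.card = Fintype.card V - 1 - 1 := by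
        rw [Finset.card_image_of_injOn, Finset.card_erase_of_mem, Finset.card_erase_of_mem,
          Finset.card_univ]
        · exact Finset.mem_univ _
        · simpa using hv
        · intro w _ w' _ h
          exact hφ.inj hk _ (Prod.mk.inj h).1
      have hdisj : Disjoint T T₂ := by
        rw [Finset.disjoint_left]
        intro t ht ht₂
        obtain ⟨-, j, hj, u, hu, h⟩ := hT' t ht
        obtain ⟨w, -, rfl⟩ := Finset.mem_image.1 ht₂
        exact (Finset.ne_of_mem_erase hj) (hφ.index_eq hu h)
      refine ⟨T ∪ T₂, ?_, ?_⟩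
      · rw [Finset.card_union_of_disjoint hdisj, hT, hT₂,
          Finset.card_erase_of_mem (Finset.mem_univ _), Finset.card_univ, Fintype.card_fin]
        obtain ⟨m, rfl⟩ : ∃ m, k = m + 2 := ⟨k - 2, by omega⟩
        have e1 : (m + 2) ^ 2 - (m + 2) = m * m + 3 * m + 2 := by
          rw [Nat.sub_eq_iff_eq_add (by nlinarith)]; ring
        have e2 : (m + 2 - 1) * (m + 2 - 1) - (m + 2 - 1) = m * m + m := by
          rw [show m + 2 - 1 = m + 1 by omega, Nat.sub_eq_iff_eq_add (by nlinarith)]; ring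
        rw [e1, e2]
        omega
      · intro t ht
        rcases Finset.mem_union.1 ht with ht | ht
        · exact (hT' t ht).1
        · obtain ⟨w, hw, rfl⟩ := Finset.mem_image.1 ht
          simp only [Finset.mem_erase, Finset.mem_univ, and_true] at hw
          exact ⟨⟨_, _, hw.2, rfl⟩, ⟨_, _, sub_ne_zero.2 (Ne.symm hw.1), rfl⟩, by simp⟩
  · push Not at hx
    obtain ⟨T, hT, hT'⟩ := hφ.exists_offDiag Finset.univ x (fun i _ v => hx i v)
    refine ⟨T, ?_, fun t ht => (hT' t ht).1⟩
    rw [hT, Finset.card_univ, Fintype.card_fin, sq]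

lemma neg_mem_spreadSet {a : G} (ha : a ∈ spreadSet φ) : -a ∈ spreadSet φ := by
  obtain ⟨i, v, hv, rfl⟩ := ha
  exact ⟨i, -v, neg_ne_zero.2 hv, by simp⟩

lemma card_spreadSet_le [Fintype V] [Finite G] :
    Nat.card (spreadSet φ) ≤ k * (Fintype.card V - 1) := by
  classical
  have h : spreadSet φ = (((Finset.univ : Finset (Fin k)) ×ˢ (Finset.univ.erase (0 : V))).image
      (fun r => φ r.1 r.2) : Finset G) := by
    ext g
    simp [spreadSet]
  rw [h, Nat.card_coe_set_eq, Set.ncard_coe_finset]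
  refine Finset.card_image_le.trans ?_
  rw [Finset.card_product, Finset.card_erase_of_mem (Finset.mem_univ _),
    Finset.card_univ, Finset.card_univ, Fintype.card_fin]

theorem IsPartialSpread.nuMin_etaMin_le [Fintype V] [Finite G] (hφ : IsPartialSpread φ)
    (hk : 2 ≤ k) (hV : 2 * k ≤ Fintype.card V) :
    nuMin G (k ^ 2 - k) ≤ k * (Fintype.card V - 1) ∧
    etaMin G (k ^ 2 - k) ≤ k * (Fintype.card V - 1) := by
  classical
  constructor
  · refine le_trans (Nat.sInf_le ?_) (card_spreadSet_le (φ := φ))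
    refine ⟨spreadSet φ, Set.toFinite _, ?_, rfl⟩
    intro x
    obtain ⟨T, hT, hT'⟩ := hφ.card_representations hk hV x
    refine hT.trans ?_
    rw [show T.card = Nat.card T by simp]
    exact Nat.card_le_card_of_injective (fun t : T => ⟨t.1, hT' t.1 t.2⟩)
      (fun a b h => Subtype.ext (congrArg (fun z => z.1) h))
  · refine le_trans (Nat.sInf_le ?_) (card_spreadSet_le (φ := φ))
    refine ⟨spreadSet φ, Set.toFinite _, ?_, rfl⟩
    intro x
    obtain ⟨T, hT, hT'⟩ := hφ.card_representations hk hV x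
    refine hT.trans ?_
    rw [show T.card = Nat.card T by simp]
    exact Nat.card_le_card_of_injective
      (fun t : T => ⟨(t.1.1, -t.1.2), (hT' t.1 t.2).1, neg_mem_spreadSet (hT' t.1 t.2).2.1,
        by simpa using (hT' t.1 t.2).2.2⟩)
      (fun a b h => by
        have h' := Prod.mk.inj (congrArg Subtype.val h)
        exact Subtype.ext (Prod.ext h'.1 (neg_injective h'.2)))

end Spread

/-- The graphs of matrices with pairwise invertible differences are pairwise complementary. -/
lemma exists_partialSpread {R : Type*} [CommRing R] {n k : ℕ}
    (M : Fin k → Matrix (Fin n) (Fin n) R) (hM : ∀ i j, i ≠ j → IsUnit (M i - M j)) :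
    ∃ φ : Fin k → (Fin n → R) →+ (Fin (2 * n) → R), IsPartialSpread φ := by
  let e₁ : Fin n ⊕ Fin n ≃ Fin (2 * n) := finSumFinEquiv.trans (finCongr (two_mul n).symm)
  let e : ((Fin n → R) × (Fin n → R)) ≃+ (Fin (2 * n) → R) :=
    ((LinearEquiv.sumArrowLequivProdArrow (Fin n) (Fin n) R R).symm.trans
      (LinearEquiv.funCongrLeft R R e₁.symm)).toAddEquiv
  refine ⟨fun i => e.toAddMonoidHom.comp
    ((AddMonoidHom.id _).prod (Matrix.mulVecLin (M i)).toAddMonoidHom), ?_⟩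
  intro i j hij
  have hU : IsUnit (M i - M j) := hM i j hij
  have hval : ∀ w : (Fin n → R) × (Fin n → R),
      e (w.1, (M i).mulVec w.1) + e (w.2, (M j).mulVec w.2)
      = e (w.1 + w.2, (M i).mulVec w.1 + (M j).mulVec w.2) := by
    intro w
    rw [← map_add, Prod.mk_add_mk]
  -- `(x, M i x) + (y, M j y) = (u, v)` means `y = u - x` and `(M i - M j) x = v - M j u`.
  suffices h : Function.Bijective (fun w : (Fin n → R) × (Fin n → R) =>
      (w.1 + w.2, (M i).mulVec w.1 + (M j).mulVec w.2)) by
    have := e.bijective.comp h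
    convert this using 1
    funext w
    exact hval w
  constructor
  · rintro ⟨x, y⟩ ⟨x', y'⟩ h
    obtain ⟨h1, h2⟩ := Prod.mk.inj h
    have hy : y - y' = x' - x := by
      rw [sub_eq_sub_iff_add_eq_add, add_comm, h1]
    have hx : (M i - M j).mulVec x = (M i - M j).mulVec x' := by
      have h3 : (M j).mulVec (y - y') = (M j).mulVec (x' - x) := by rw [hy]
      simp only [Matrix.mulVec_sub] at h3
      simp only [Matrix.sub_mulVec]
      linear_combination (exp := 1) h2 - h3
    have hxx : x = x' := Matrix.mulVec_injective_of_isUnit hU hx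
    subst hxx
    simpa using h1
  · rintro ⟨u, v⟩
    obtain ⟨x, hx⟩ := Matrix.mulVec_surjective_iff_isUnit.2 hU (v - (M j).mulVec u)
    refine ⟨(x, u - x), Prod.ext (by simp) ?_⟩
    simp only [Matrix.mulVec_sub, Matrix.sub_mulVec] at hx ⊢
    linear_combination (exp := 1) hx

/-- For a prime `p`, integers `s, n ≥ 1`, and `2 ≤ k ≤ min{p^n, p^{sn}/2}` (the latter encoded
as `2k ≤ p^{sn}`), we have `ν_{k²−k}(Z_{p^s}^{2n}) ≤ k(p^{sn} − 1)` and
`η_{k²−k}(Z_{p^s}^{2n}) ≤ k(p^{sn} − 1)`. -/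
theorem stmt19 (p : ℕ) (hp : p.Prime) (s n : ℕ) (hs : 1 ≤ s) (hn : 1 ≤ n)
    (k : ℕ) (hk2 : 2 ≤ k) (hkn : k ≤ p ^ n) (hksn : 2 * k ≤ p ^ (s * n)) :
    nuMin (Fin (2 * n) → ZMod (p ^ s)) (k ^ 2 - k) ≤ k * (p ^ (s * n) - 1) ∧
    etaMin (Fin (2 * n) → ZMod (p ^ s)) (k ^ 2 - k) ≤ k * (p ^ (s * n) - 1) := by
  obtain ⟨M, hM⟩ := exists_matrices p hp s n hs hn k hkn
  obtain ⟨φ, hφ⟩ := exists_partialSpread M hM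
  have : NeZero (p ^ s) := ⟨pow_ne_zero _ hp.ne_zero⟩
  have hcard : Fintype.card (Fin n → ZMod (p ^ s)) = p ^ (s * n) := by
    rw [Fintype.card_fun, ZMod.card, Fintype.card_fin, pow_mul]
  have h := hφ.nuMin_etaMin_le hk2 (hksn.trans hcard.ge)
  rwa [hcard] at h
end
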